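/- Let f = Σ_{λ∈Λ} Σ_k p_k(λ) D^k δ_λ (k ∈ (ℕ∪{0})^d) be a tempered distribution on ℝ^d whose support Λ and spectrum Γ = supp f̂ are both uniformly discrete. If there are constants 0 < c ≤ C < ∞ such that c ≤ sup_k |p_k(λ)| ≤ C for every λ ∈ Λ, then Λ is a finite union of translates of several full-rank lattices. -/

import Mathlib

open MeasureTheory SchwartzMap Metric Set
open scoped Pointwise RealInnerProductSpace ENNReal NNReal

noncomputable section

/-- Euclidean space `ℝ^d`. -/
abbrev Rd (d : ℕ) : Type := EuclideanSpace ℝ (Fin d)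

/-- The space `S*(ℝ^d)` of tempered distributions: continuous linear functionals
on the Schwartz space `S(ℝ^d)`. -/
abbrev TemperedDist (d : ℕ) : Type := SchwartzMap (Rd d) ℂ →L[ℂ] ℂ

/-- The Fourier transform of a tempered distribution: `f̂(φ) = f(φ̂)`. -/
def fourierTD {d : ℕ} (f : TemperedDist d) : TemperedDist d :=
  f.comp (fourierTransformCLM ℂ)

/-- The support of a tempered distribution: `x ∈ supp f` iff for every open
neighbourhood `U` of `x` there is a smooth compactly supported test function
supported in `U` on which `f` does not vanish. -/
def tdSupport {d : ℕ} (f : TemperedDist d) : Set (Rd d) :=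
  {x | ∀ U : Set (Rd d), IsOpen U → x ∈ U →
    ∃ φ : SchwartzMap (Rd d) ℂ, HasCompactSupport (⇑φ) ∧ tsupport (⇑φ) ⊆ U ∧ f φ ≠ 0}

/-- A set is locally finite if its intersection with every ball is finite. -/
def LocFinite {d : ℕ} (A : Set (Rd d)) : Prop :=
  ∀ (x : Rd d) (r : ℝ), (A ∩ Metric.ball x r).Finite

/-- A set is uniformly discrete if distances between distinct points are
bounded below by a positive constant. -/
def UniformlyDiscrete {d : ℕ} (A : Set (Rd d)) : Prop :=
  ∃ η > (0:ℝ), ∀ x ∈ A, ∀ y ∈ A, x ≠ y → η ≤ dist x y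

/-- A set is polynomially discrete (p-discrete) if
`|x - x'| ≥ c min{1, |x|^{-h}}` for distinct points `x, x'` of the set. -/
def PDiscrete {d : ℕ} (A : Set (Rd d)) : Prop :=
  ∃ c > (0:ℝ), ∃ h > (0:ℝ), ∀ x ∈ A, ∀ y ∈ A, x ≠ y →
    c * (if ‖x‖ ≤ 1 then 1 else ‖x‖ ^ (-h)) ≤ dist x y

/-- A set has bounded density if it is locally finite and the number of its
points in balls of radius 1 is uniformly bounded. -/
def BoundedDensity {d : ℕ} (A : Set (Rd d)) : Prop :=
  LocFinite A ∧ ∃ N : ℕ, ∀ x : Rd d, (A ∩ Metric.ball x 1).ncard ≤ N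

/-- A set is relatively dense if it intersects every ball of some fixed radius `R`. -/
def RelDense {d : ℕ} (A : Set (Rd d)) : Prop :=
  ∃ R : ℝ, 0 < R ∧ ∀ x : Rd d, ∃ a ∈ A, dist x a ≤ R

/-- A full-rank lattice in `ℝ^d` is the image of `ℤ^d` under an invertible
linear operator. -/
def IsFullRankLattice {d : ℕ} (L : Set (Rd d)) : Prop :=
  ∃ T : Rd d →ₗ[ℝ] Rd d, Function.Bijective T ∧
    L = T '' {x : Rd d | ∀ i, ∃ n : ℤ, x i = (n : ℝ)}

/-- The multi-indices `k ∈ (ℕ ∪ {0})^d` with `‖k‖ = k₁ + ⋯ + k_d ≤ K`. -/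
def mIdx (d K : ℕ) : Finset (Fin d → ℕ) :=
  (Finset.Iic fun _ => K).filter fun k => (∑ i, k i) ≤ K

/-- Partial derivative in the `i`-th coordinate direction. -/
def pderiv' {d : ℕ} (i : Fin d) (φ : Rd d → ℂ) : Rd d → ℂ :=
  fun x => fderiv ℝ φ x (EuclideanSpace.single i (1:ℝ))

/-- The mixed partial derivative `D^k = ∂^{k₁}_{x₁} ⋯ ∂^{k_d}_{x_d}`. -/
def Dmulti {d : ℕ} (k : Fin d → ℕ) : (Rd d → ℂ) → (Rd d → ℂ) :=
  ((List.finRange d).map fun i => (pderiv' i)^[k i]).foldr (· ∘ ·) id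

/-- The action of `D^k δ_λ` on a test function: `φ ↦ (-1)^{‖k‖} (D^k φ)(λ)`. -/
def dkDelta {d : ℕ} (k : Fin d → ℕ) (lam : Rd d) (φ : SchwartzMap (Rd d) ℂ) : ℂ :=
  (-1 : ℂ) ^ (∑ i, k i) * Dmulti k (⇑φ) lam

/-- The exponential `e^{2πi⟨x,w⟩}`. -/
def e2pi {d : ℕ} (x w : Rd d) : ℂ :=
  Complex.exp (((2 * Real.pi : ℝ) : ℂ) * Complex.I * ((⟪x, w⟫ : ℝ) : ℂ))

/-- A trigonometric polynomial: a finite sum `Σ c_ω e^{2πi⟨x,ω⟩}`. -/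
def IsTrigPoly {d : ℕ} (P : Rd d → ℂ) : Prop :=
  ∃ (n : ℕ) (cc : Fin n → ℂ) (w : Fin n → Rd d),
    ∀ x, P x = ∑ i, cc i * e2pi x (w i)

/-- The monomial `x^m = x₁^{m₁} ⋯ x_d^{m_d}` (as a complex number). -/
def monom {d : ℕ} (m : Fin d → ℕ) (x : Rd d) : ℂ := ((∏ i, (x i) ^ (m i) : ℝ) : ℂ)

/-- The total variation of the pure point measure with masses `b` on the open
ball `B(0,r)`: `Σ_{|γ| < r} |b(γ)|` (as an extended nonnegative real). -/
def ballVar {d : ℕ} (b : Rd d → ℂ) (r : ℝ) : ℝ≥0∞ :=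
  ∑' γ : Rd d, if ‖γ‖ < r then (‖b γ‖₊ : ℝ≥0∞) else 0

/-- The pure point measure `μ = Σ_λ a(λ) δ_λ` belongs to `S*(ℝ^d)` and is
represented there by the tempered distribution `f`: its support is countable,
`Σ_λ |a(λ)| |φ(λ)| < ∞` for every Schwartz function `φ`, and the (automatically
continuous) functional `φ ↦ Σ_λ a(λ) φ(λ)` coincides with `f`. -/
def RepMeasure {d : ℕ} (a : Rd d → ℂ) (f : TemperedDist d) : Prop :=
  {x | a x ≠ 0}.Countable ∧
  (∀ φ : SchwartzMap (Rd d) ℂ, Summable fun lam => ‖a lam‖ * ‖φ lam‖) ∧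
  (∀ φ : SchwartzMap (Rd d) ℂ, f φ = ∑' lam, a lam * φ lam)

/-- A continuous function on `ℝ^d` is almost periodic if for every `ε > 0` its
set of `ε`-almost periods is relatively dense. -/
def APFunction {d : ℕ} (g : Rd d → ℂ) : Prop :=
  Continuous g ∧ ∀ ε > (0:ℝ), RelDense {τ : Rd d | ∀ t, ‖g (t + τ) - g t‖ < ε}

/-- A tempered distribution is almost periodic if for every smooth compactly
supported `ψ` the function `t ↦ f(ψ(t - ·))` is almost periodic. -/
def APDistribution {d : ℕ} (f : TemperedDist d) : Prop :=
  ∀ ψ : Rd d → ℂ, ContDiff ℝ (⊤ : ℕ∞) ψ → HasCompactSupport ψ →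
    ∀ Φ : Rd d → SchwartzMap (Rd d) ℂ, (∀ t y, Φ t y = ψ (t - y)) →
      APFunction fun t => f (Φ t)

section Aux
open Filter Topology

/-! ### e2pi basics -/
section e2piBasics
variable {d : ℕ}

lemma e2pi_add_left (x y w : Rd d) : e2pi (x + y) w = e2pi x w * e2pi y w := by
  simp only [e2pi, inner_add_left, Complex.ofReal_add, mul_add, Complex.exp_add]

lemma e2pi_add_right (x y w : Rd d) : e2pi w (x + y) = e2pi w x * e2pi w y := by
  simp only [e2pi, inner_add_right, Complex.ofReal_add, mul_add, Complex.exp_add]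

@[simp] lemma e2pi_zero_left (w : Rd d) : e2pi 0 w = 1 := by simp [e2pi]
@[simp] lemma e2pi_zero_right (w : Rd d) : e2pi w 0 = 1 := by simp [e2pi]

lemma e2pi_comm (x w : Rd d) : e2pi x w = e2pi w x := by
  simp only [e2pi, real_inner_comm]

@[simp] lemma norm_e2pi (x w : Rd d) : ‖e2pi x w‖ = 1 := by
  rw [e2pi, Complex.norm_exp]
  simp

lemma e2pi_ne_zero (x w : Rd d) : e2pi x w ≠ 0 := Complex.exp_ne_zero _

lemma e2pi_neg_left (x w : Rd d) : e2pi (-x) w = (e2pi x w)⁻¹ := by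
  simp [e2pi, inner_neg_left, Complex.exp_neg]

lemma e2pi_neg_right (x w : Rd d) : e2pi x (-w) = (e2pi x w)⁻¹ := by
  simp [e2pi, inner_neg_right, Complex.exp_neg]

lemma conj_e2pi (x w : Rd d) : (starRingEnd ℂ) (e2pi x w) = e2pi (-x) w := by
  rw [e2pi_neg_left, Complex.inv_def, Complex.normSq_eq_norm_sq]; simp

lemma e2pi_sub_left (x y w : Rd d) : e2pi (x - y) w = e2pi x w * (e2pi y w)⁻¹ := by
  rw [sub_eq_add_neg, e2pi_add_left, e2pi_neg_left]

lemma e2pi_sub_right (x y w : Rd d) : e2pi w (x - y) = e2pi w x * (e2pi w y)⁻¹ := by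
  rw [sub_eq_add_neg, e2pi_add_right, e2pi_neg_right]

lemma continuous_e2pi_left (w : Rd d) : Continuous fun x => e2pi x w := by
  unfold e2pi; fun_prop

end e2piBasics

/-! ### Bohr filter -/
section Bohr
variable {d : ℕ}

def bohr (d : ℕ) : Filter (Rd d) := ⨅ θ : Rd d, comap (fun h => e2pi h θ) (𝓝 1)

lemma tendsto_bohr (θ : Rd d) : Tendsto (fun h => e2pi h θ) (bohr d) (𝓝 1) :=
  tendsto_iff_comap.2 (iInf_le _ θ)

lemma mem_bohr {U : Set (Rd d)} : U ∈ bohr d ↔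
    ∃ (F : Finset (Rd d)) (ε : ℝ), 0 < ε ∧ {h | ∀ θ ∈ F, ‖e2pi h θ - 1‖ < ε} ⊆ U := by
  constructor
  · intro hU
    rw [bohr, mem_iInf'] at hU
    obtain ⟨I, hI, V, hV, -, rfl, -⟩ := hU
    have : ∀ i ∈ I, ∃ ε > 0, {h | ‖e2pi h i - 1‖ < ε} ⊆ V i := by
      intro i _
      obtain ⟨T, hT, hTV⟩ := mem_comap.1 (hV i)
      obtain ⟨ε, hε, hb⟩ := Metric.mem_nhds_iff.1 hT
      refine ⟨ε, hε, fun h hh => hTV (hb ?_)⟩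
      simpa [dist_eq_norm] using hh
    choose! ε hε hsub using this
    by_cases hne : I.Nonempty
    · obtain ⟨i0, hi0, hmin⟩ := Set.exists_min_image I ε hI hne
      refine ⟨hI.toFinset, ε i0, hε _ hi0, fun h hh => ?_⟩
      simp only [mem_iInter]
      intro i hi
      exact hsub i hi (lt_of_lt_of_le (hh i (by simpa using hi)) (hmin i hi))
    · rw [Set.not_nonempty_iff_eq_empty] at hne
      subst hne
      exact ⟨∅, 1, one_pos, by simp⟩
  · rintro ⟨F, ε, hε, hsub⟩
    refine mem_of_superset ?_ hsub
    have : ∀ θ ∈ F, ∀ᶠ h in bohr d, ‖e2pi h θ - 1‖ < ε := by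
      intro θ _
      have := (tendsto_bohr θ).eventually (Metric.ball_mem_nhds 1 hε)
      filter_upwards [this] with h hh
      simpa [dist_eq_norm] using hh
    exact (Filter.eventually_all_finset F).2 this

lemma tendsto_neg_bohr : Tendsto (fun h : Rd d => -h) (bohr d) (bohr d) := by
  refine tendsto_iInf.2 fun θ => ?_
  rw [tendsto_comap_iff]
  have := (tendsto_bohr θ).inv₀ one_ne_zero
  simpa [Function.comp_def, e2pi_neg_left] using this

lemma bohr_thicken {U : Set (Rd d)} (hU : U ∈ bohr d) :
    ∃ U1 ∈ bohr d, ∃ r > (0:ℝ), ∀ h ∈ U1, ∀ b, ‖b‖ < r → h + b ∈ U := by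
  obtain ⟨F, ε, hε, hsub⟩ := mem_bohr.1 hU
  refine ⟨{h | ∀ θ ∈ F, ‖e2pi h θ - 1‖ < ε / 2}, mem_bohr.2 ⟨F, ε/2, by positivity, subset_rfl⟩, ?_⟩
  have : ∀ᶠ b in 𝓝 (0 : Rd d), ∀ θ ∈ F, ‖e2pi b θ - 1‖ < ε / 2 := by
    refine (Filter.eventually_all_finset F).2 fun θ _ => ?_
    have h1 : Tendsto (fun b => ‖e2pi b θ - 1‖) (𝓝 0) (𝓝 ‖e2pi (0 : Rd d) θ - 1‖) :=
      (((continuous_e2pi_left θ).sub continuous_const).norm).tendsto 0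
    simp only [e2pi_zero_left, sub_self, norm_zero] at h1
    exact h1.eventually (gt_mem_nhds (by positivity))
  obtain ⟨r, hr, hb⟩ := Metric.eventually_nhds_iff.1 this
  refine ⟨r, hr, fun h hh b hbr => hsub fun θ hθ => ?_⟩
  have h1 := hh θ hθ
  have h2 := hb (y := b) (by simpa using hbr) θ hθ
  calc ‖e2pi (h + b) θ - 1‖ = ‖e2pi h θ * (e2pi b θ - 1) + (e2pi h θ - 1)‖ := by
        rw [e2pi_add_left]; ring_nf
    _ ≤ ‖e2pi h θ * (e2pi b θ - 1)‖ + ‖e2pi h θ - 1‖ := norm_add_le _ _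
    _ < ε := by rw [norm_mul, norm_e2pi]; linarith

lemma bohr_relDense {U : Set (Rd d)} (hU : U ∈ bohr d) : RelDense U := by
  obtain ⟨F, ε, hε, hsub⟩ := mem_bohr.1 hU
  let Φ : Rd d → (F → ℂ) := fun h θ => e2pi h θ
  have htb : TotallyBounded (range Φ) := by
    refine (isCompact_closedBall (0 : F → ℂ) 1).totallyBounded.subset ?_
    rintro _ ⟨h, rfl⟩
    rw [mem_closedBall_zero_iff, pi_norm_le_iff_of_nonneg zero_le_one]
    intro θ; simp [Φ]
  obtain ⟨t, hts, htf, hcov⟩ := Metric.finite_approx_of_totallyBounded htb ε hε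
  obtain ⟨s, hs, hst⟩ : ∃ s : Set (Rd d), s.Finite ∧ t ⊆ Φ '' s := by
    choose! g hg using fun y (hy : y ∈ t) => hts hy
    exact ⟨g '' t, htf.image g, fun y hy => ⟨g y, mem_image_of_mem _ hy, hg y hy⟩⟩
  obtain ⟨R, hR⟩ := hs.isBounded.exists_norm_le
  refine ⟨max R 1, by positivity, fun x => ?_⟩
  have hx : Φ x ∈ ⋃ y ∈ t, ball y ε := hcov (mem_range_self x)
  simp only [mem_iUnion, exists_prop] at hx
  obtain ⟨y, hy, hxy⟩ := hx
  obtain ⟨a, ha, rfl⟩ := hst hy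
  refine ⟨x - a, hsub fun θ hθ => ?_, ?_⟩
  · have := (dist_pi_lt_iff hε).1 hxy ⟨θ, hθ⟩
    simp only [Φ, dist_eq_norm] at this
    have h2 : e2pi (x - a) θ - 1 = (e2pi x θ - e2pi a θ) * (e2pi a θ)⁻¹ := by
      rw [e2pi_sub_left, sub_mul, mul_inv_cancel₀ (e2pi_ne_zero _ _)]
    rw [h2, norm_mul, norm_inv, norm_e2pi]; simpa using this
  · simp only [dist_eq_norm, sub_sub_cancel]
    exact (hR a ha).trans (le_max_left _ _)

lemma norm_exp_lower (x : ℝ) :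
    4 * |x - round x| ≤ ‖Complex.exp (((2 * Real.pi : ℝ) : ℂ) * Complex.I * (x : ℂ)) - 1‖ := by
  set y := x - round x with hy
  have h1 : Complex.exp (((2 * Real.pi : ℝ) : ℂ) * Complex.I * (x : ℂ)) =
      Complex.exp (Complex.I * ((2 * Real.pi * y : ℝ) : ℂ)) := by
    rw [Complex.exp_eq_exp_iff_exists_int]
    refine ⟨round x, ?_⟩
    rw [hy]; push_cast; ring
  rw [h1, Complex.norm_exp_I_mul_ofReal_sub_one]
  have hy2 : |y| ≤ 1 / 2 := abs_sub_round x
  have : 2 * Real.pi * y / 2 = Real.pi * y := by ring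
  rw [this, norm_mul, Real.norm_eq_abs, Real.norm_eq_abs]
  have h3 := Real.mul_abs_le_abs_sin (x := Real.pi * y) (by
    rw [abs_mul, abs_of_pos Real.pi_pos]; nlinarith [Real.pi_pos])
  rw [abs_mul, abs_of_pos Real.pi_pos] at h3
  have : 2 / Real.pi * (Real.pi * |y|) = 2 * |y| := by field_simp
  rw [this] at h3
  simp only [Nat.abs_ofNat]
  linarith

lemma bohr_near_lattice (H : AddSubgroup (Rd d)) {ι : Type*} [Fintype ι]
    (b : Module.Basis ι ℝ (Rd d)) (hb : ∀ i, b i ∈ H) {r : ℝ} (hr : 0 < r) :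
    ∀ᶠ h in bohr d, ∃ k ∈ H, ‖h - k‖ < r := by
  classical
  have hθ : ∀ i, ∃ θ : Rd d, ∀ h, b.repr h i = ⟪h, θ⟫ := by
    intro i
    refine ⟨(InnerProductSpace.toDual ℝ (Rd d)).symm (LinearMap.toContinuousLinearMap (b.coord i)),
      fun h => ?_⟩
    rw [real_inner_comm, InnerProductSpace.toDual_symm_apply]; simp
  choose θ hθ using hθ
  set M := ∑ i, ‖b i‖ with hM
  have hM0 : 0 ≤ M := Finset.sum_nonneg fun _ _ => norm_nonneg _
  set δ := r / (M + 1)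
  have hδ : 0 < δ := by positivity
  refine mem_bohr.2 ⟨Finset.univ.image θ, δ, hδ, fun h hh => ?_⟩
  refine ⟨∑ i, (round (b.repr h i) : ℤ) • b i, H.sum_mem fun i _ => H.zsmul_mem (hb i) _, ?_⟩
  have h1 : h - ∑ i, (round (b.repr h i) : ℤ) • b i =
      ∑ i, (b.repr h i - round (b.repr h i)) • b i := by
    simp only [sub_smul, Finset.sum_sub_distrib, b.sum_repr]
    simp [Int.cast_smul_eq_zsmul]
  rw [h1]
  calc ‖∑ i, (b.repr h i - round (b.repr h i)) • b i‖ 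
      ≤ ∑ i, δ * ‖b i‖ := by
        refine norm_sum_le_of_le _ fun i _ => ?_
        rw [norm_smul]
        gcongr
        have h2 := hh (θ i) (Finset.mem_image_of_mem _ (Finset.mem_univ i))
        have h3 := norm_exp_lower (b.repr h i)
        rw [hθ i h] at h3 ⊢
        change 4 * _ ≤ ‖e2pi h (θ i) - 1‖ at h3
        rw [Real.norm_eq_abs]
        have := abs_nonneg (⟪h, θ i⟫ - round ⟪h, θ i⟫)
        linarith
    _ = δ * M := by rw [hM, Finset.mul_sum]
    _ < r := by
        have : δ * (M + 1) = r := by simp only [δ]; field_simp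
        linarith

end Bohr

section Aux2
variable {d : ℕ}

lemma relDense_not_cover {D : Set (Rd d)} (hD : RelDense D) {ι : Type*} [Finite ι]
    (p : ι → Submodule ℝ (Rd d)) (hp : ∀ i, p i ≠ ⊤) (a : ι → Rd d) :
    ∃ h ∈ D, ∀ i, h - a i ∉ p i := by
  obtain ⟨R, hR, hDR⟩ := hD
  obtain ⟨y, hy⟩ := Submodule.exists_forall_notMem_of_forall_ne_top p hp
  choose g hgD hg using fun n : ℕ => hDR ((n : ℝ) • y)
  by_contra! hcon
  have hev : ∀ i, ∀ᶠ n : ℕ in atTop, g n - a i ∉ p i := by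
    intro i
    obtain ⟨φ, hφy, hφp⟩ := Submodule.exists_le_ker_of_notMem (hy i)
    let Φ := LinearMap.toContinuousLinearMap φ
    have hpos : 0 < |φ y| := abs_pos.2 hφy
    obtain ⟨N, hN⟩ := exists_nat_gt ((‖Φ‖ * R + |φ (a i)|) / |φ y|)
    filter_upwards [eventually_ge_atTop N] with n hn hmem
    have h0 : φ (g n - a i) = 0 := hφp hmem
    have h1 : (n : ℝ) * φ y = φ ((n : ℝ) • y - g n) + φ (a i) := by
      simp only [map_sub, map_smul, smul_eq_mul] at h0 ⊢
      linarith
    have h2 : |φ ((n : ℝ) • y - g n)| ≤ ‖Φ‖ * R := by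
      have := Φ.le_opNorm ((n : ℝ) • y - g n)
      refine this.trans ?_
      have h3 := hg n
      rw [dist_eq_norm] at h3
      gcongr
    have h4 : (n : ℝ) * |φ y| ≤ ‖Φ‖ * R + |φ (a i)| := by
      calc (n : ℝ) * |φ y| = |(n : ℝ) * φ y| := by rw [abs_mul, Nat.abs_cast]
        _ ≤ _ := by rw [h1]; exact (abs_add_le _ _).trans (by gcongr)
    have h5 : (N : ℝ) ≤ n := by exact_mod_cast hn
    rw [div_lt_iff₀ hpos] at hN
    nlinarith
  obtain ⟨n, hn⟩ := (eventually_all.2 hev).exists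
  obtain ⟨i, hi⟩ := hcon (g n) (hgD n)
  exact hn i hi

lemma exists_ultra {T : Set (Rd d)} (hT : ∀ U ∈ bohr d, RelDense {h | h ∈ U ∧ h ∈ T}) :
    ∃ 𝒰 : Ultrafilter (Rd d), (𝒰 : Filter (Rd d)) ≤ bohr d ∧ T ∈ 𝒰 ∧
      ∀ A ∈ 𝒰, ∀ (p : Submodule ℝ (Rd d)) (a : Rd d), (∀ h ∈ A, h - a ∈ p) → p = ⊤ := by
  let G : Filter (Rd d) := ⨅ q : {p : Submodule ℝ (Rd d) // p ≠ ⊤} × Rd d,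
    𝓟 {h | h - q.2 ∉ q.1.1}
  have hne : (bohr d ⊓ 𝓟 T ⊓ G).NeBot := by
    rw [Filter.inf_neBot_iff]
    intro s hs s' hs'
    rw [mem_inf_principal] at hs
    simp only [G] at hs'
    rw [mem_iInf'] at hs'
    obtain ⟨I, hI, V, hV, -, rfl, -⟩ := hs'
    have := hI.to_subtype
    obtain ⟨h, hh, hh2⟩ := relDense_not_cover (hT _ hs) (fun i : I => i.1.1.1)
      (fun i => i.1.1.2) (fun i => i.1.2)
    refine ⟨h, hh.1 hh.2, ?_⟩
    simp only [mem_iInter]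
    intro i hi
    exact (mem_principal.1 (hV i)) (hh2 ⟨i, hi⟩)
  refine ⟨Ultrafilter.of (bohr d ⊓ 𝓟 T ⊓ G), ?_, ?_, ?_⟩
  · exact (Ultrafilter.of_le _).trans (inf_le_left.trans inf_le_left)
  · exact (Ultrafilter.of_le _).trans (inf_le_left.trans inf_le_right) (mem_principal_self T)
  · intro A hA p a hAp
    by_contra hp
    have h1 : {h | h - a ∉ p} ∈ (Ultrafilter.of (bohr d ⊓ 𝓟 T ⊓ G) : Filter (Rd d)) :=
      (Ultrafilter.of_le _).trans (inf_le_right.trans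
        (iInf_le _ (⟨p, hp⟩, a))) (mem_principal_self _)
    obtain ⟨h, hhA, hh⟩ := (Ultrafilter.of (bohr d ⊓ 𝓟 T ⊓ G)).nonempty_of_mem (inter_mem hA h1)
    exact hh (hAp h hhA)

lemma ud_finite {A : Set (Rd d)} {η : ℝ} (hη : 0 < η)
    (hA : ∀ x ∈ A, ∀ y ∈ A, x ≠ y → η ≤ dist x y) (x : Rd d) (R : ℝ) :
    (A ∩ closedBall x R).Finite := by
  obtain ⟨t, -, htf, hcov⟩ := Metric.finite_approx_of_totallyBounded
    (isCompact_closedBall x R).totallyBounded (η / 2) (by positivity)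
  have : ∀ y ∈ A ∩ closedBall x R, ∃ z ∈ t, dist y z < η / 2 := by
    intro y hy
    have := hcov hy.2
    simpa using this
  choose! g hg hgd using this
  refine Set.Finite.of_finite_image (htf.subset (image_subset_iff.2 hg)) ?_
  intro y hy z hz hyz
  by_contra hne
  have h1 := hA y hy.1 z hz.1 hne
  have h2 := hgd y hy
  have h3 := hgd z hz
  rw [← hyz] at h3
  have := dist_triangle_right y z (g y)
  linarith

def IsFUL (A : Set (Rd d)) : Prop :=
  ∃ s : Set (Set (Rd d) × Rd d), s.Finite ∧ (∀ q ∈ s, IsFullRankLattice q.1) ∧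
    A = ⋃ q ∈ s, (fun y => q.2 + y) '' q.1

lemma IsFUL.empty : IsFUL (∅ : Set (Rd d)) := ⟨∅, finite_empty, by simp, by simp⟩

lemma IsFUL.union {A B : Set (Rd d)} (hA : IsFUL A) (hB : IsFUL B) : IsFUL (A ∪ B) := by
  obtain ⟨s, hs, h1, rfl⟩ := hA
  obtain ⟨t, ht, h2, rfl⟩ := hB
  exact ⟨s ∪ t, hs.union ht, fun q hq => hq.elim (h1 q) (h2 q), by rw [biUnion_union]⟩

lemma IsFUL.fin {A : Set (Rd d)} (hA : IsFUL A) :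
    ∃ (J : ℕ) (L : Fin J → Set (Rd d)) (v : Fin J → Rd d),
      (∀ j, IsFullRankLattice (L j)) ∧ A = ⋃ j, (fun y => v j + y) '' (L j) := by
  obtain ⟨s, hs, h1, rfl⟩ := hA
  have := hs.to_subtype
  obtain ⟨n, ⟨e⟩⟩ := Finite.exists_equiv_fin s
  refine ⟨n, fun j => (e.symm j).1.1, fun j => (e.symm j).1.2, fun j => h1 _ (e.symm j).2, ?_⟩
  rw [biUnion_eq_iUnion]
  exact (e.symm.surjective.iUnion_comp (fun q : s => (fun y => q.1.2 + y) '' q.1.1)).symm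

/-- A discrete full-rank subgroup is a full-rank lattice, with a basis inside. -/
lemma lattice_basis (H : AddSubgroup (Rd d)) {η : ℝ} (hη : 0 < η)
    (hH : ∀ k ∈ H, k ≠ 0 → η ≤ ‖k‖) (hspan : Submodule.span ℝ (H : Set (Rd d)) = ⊤) :
    ∃ b : Module.Basis (Fin d) ℝ (Rd d), (∀ i, b i ∈ H) ∧ IsFullRankLattice (H : Set (Rd d)) := by
  let L : Submodule ℤ (Rd d) := AddSubgroup.toIntSubmodule H
  have : DiscreteTopology L := DiscreteTopology.of_forall_le_norm hη (fun x hx => hH x.1 x.2 (by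
    simpa using hx))
  have : IsZLattice ℝ L := ⟨hspan⟩
  have : Module.Free ℤ L := ZLattice.module_free ℝ L
  have : Module.Finite ℤ L := ZLattice.module_finite ℝ L
  have hrank : Module.finrank ℤ L = d := by
    rw [ZLattice.rank ℝ L]; simp
  let b0 : Module.Basis (Fin d) ℤ L := Module.finBasisOfFinrankEq ℤ L hrank
  let b := b0.ofZLatticeBasis ℝ L
  have hb : ∀ i, b i ∈ H := by
    intro i
    rw [b0.ofZLatticeBasis_apply ℝ L i]
    exact (b0 i).2
  refine ⟨b, hb, ?_⟩
  let e := (EuclideanSpace.basisFun (Fin d) ℝ).toBasis.equiv b (Equiv.refl _)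
  have he : ∀ x : Rd d, e x = ∑ i, x i • b i := by
    intro x
    have hx : x = ∑ i, x i • (EuclideanSpace.basisFun (Fin d) ℝ).toBasis i := by
      conv_lhs => rw [← (EuclideanSpace.basisFun (Fin d) ℝ).toBasis.sum_repr x]
      simp
    conv_lhs => rw [hx]
    rw [map_sum]
    refine Finset.sum_congr rfl fun i _ => ?_
    rw [map_smul, Module.Basis.equiv_apply, Equiv.refl_apply]
  refine ⟨e.toLinearMap, e.bijective, ?_⟩
  ext x
  constructor
  · intro hx
    refine ⟨e.symm x, ?_, by simp⟩
    intro i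
    let y : L := ⟨x, hx⟩
    refine ⟨b0.repr y i, ?_⟩
    rw [← b0.ofZLatticeBasis_repr_apply ℝ L y i]
    have h3 : e.symm x = ∑ i, b.repr x i • (EuclideanSpace.basisFun (Fin d) ℝ).toBasis i := by
      rw [LinearEquiv.symm_apply_eq, map_sum]
      conv_lhs => rw [← b.sum_repr x]
      refine Finset.sum_congr rfl fun i _ => ?_
      rw [map_smul, Module.Basis.equiv_apply, Equiv.refl_apply]
    rw [h3]
    simp [y, b, Finset.sum_apply, Pi.single_apply]
  · rintro ⟨y, hy, rfl⟩
    change e y ∈ H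
    rw [he]
    refine H.sum_mem fun i _ => ?_
    obtain ⟨n, hn⟩ := hy i
    rw [hn, Int.cast_smul_eq_zsmul]
    exact H.zsmul_mem (hb i) n

lemma stab_FUL {S : Set (Rd d)} {η : ℝ} (hη : 0 < η)
    (hS : ∀ x ∈ S, ∀ y ∈ S, x ≠ y → η ≤ dist x y) (H : AddSubgroup (Rd d))
    (hstab : ∀ k ∈ H, ∀ w, w + k ∈ S ↔ w ∈ S) (b : Module.Basis (Fin d) ℝ (Rd d))
    (hb : ∀ i, b i ∈ H) (hH : IsFullRankLattice (H : Set (Rd d))) : IsFUL S := by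
  set R := ∑ i, ‖b i‖
  refine ⟨(fun v => ((H : Set (Rd d)), v)) '' (S ∩ closedBall 0 R), (ud_finite hη hS 0 R).image _,
    ?_, ?_⟩
  · rintro _ ⟨v, -, rfl⟩
    exact hH
  · rw [biUnion_image]
    ext z
    simp only [mem_iUnion, exists_prop]
    constructor
    · intro hz
      have hf : ‖ZSpan.fract b z‖ ≤ R := ZSpan.norm_fract_le (K := ℝ) b z
      have hfl : ((ZSpan.floor b z : Submodule.span ℤ (range b)) : Rd d) ∈ H := by
        have : Submodule.span ℤ (range b) ≤ AddSubgroup.toIntSubmodule H :=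
          Submodule.span_le.2 (by rintro _ ⟨i, rfl⟩; exact hb i)
        exact this (ZSpan.floor b z).2
      refine ⟨ZSpan.fract b z, ⟨?_, by simpa using hf⟩, (ZSpan.floor b z : Rd d), hfl, ?_⟩
      · rw [← hstab _ hfl]; simpa [ZSpan.fract_apply] using hz
      · simp [ZSpan.fract_apply]
    · rintro ⟨v, ⟨hv, -⟩, k, hk, rfl⟩
      exact (hstab k hk v).2 hv

end Aux2

section PartTwo
variable {d : ℕ} {V W : Type*} [NormedAddCommGroup V] [NormedSpace ℂ V]
  [NormedAddCommGroup W] [InnerProductSpace ℂ W]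

def BB (ρ : Rd d → V →L[ℂ] W) (t : Rd d) (F G : Rd d → V) : ℂ :=
  ∑' x, inner ℂ (ρ (x - t) (G x)) (ρ (x - t) (F x))

def LL (ρ : Rd d → V →L[ℂ] W) (F : Rd d → V) : Prop :=
  ∀ t, Summable fun x => ‖ρ (x - t) (F x)‖ ^ 2

variable {ρ : Rd d → V →L[ℂ] W}

lemma LL.sub {F G : Rd d → V} (hF : LL ρ F) (hG : LL ρ G) : LL ρ (fun z => F z - G z) := by
  intro t
  refine Summable.of_nonneg_of_le (fun _ => by positivity) (fun x => ?_)
    (((hF t).add (hG t)).mul_left 2)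
  rw [map_sub]
  have := parallelogram_law_with_norm ℂ (ρ (x - t) (F x)) (ρ (x - t) (G x))
  nlinarith [norm_nonneg (ρ (x - t) (F x) + ρ (x - t) (G x))]

lemma LL.shift {F : Rd d → V} (hF : LL ρ F) (k : Rd d) : LL ρ (fun z => F (z + k)) := by
  intro t
  rw [← (Equiv.subRight k).summable_iff]
  refine (hF (t + k)).congr fun x => ?_
  simp only [Function.comp_apply, Equiv.subRight_apply, sub_add_cancel]
  congr 4; abel

lemma summable_BB {F G : Rd d → V} (hF : LL ρ F) (hG : LL ρ G) (t : Rd d) :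
    Summable fun x => inner ℂ (ρ (x - t) (G x)) (ρ (x - t) (F x)) := by
  refine Summable.of_norm_bounded ((hF t).add (hG t)) fun x => ?_
  refine (norm_inner_le_norm _ _).trans ?_
  nlinarith [sq_nonneg (‖ρ (x - t) (G x)‖ - ‖ρ (x - t) (F x)‖),
    sq_nonneg (‖ρ (x - t) (G x)‖), sq_nonneg (‖ρ (x - t) (F x)‖)]

lemma BB_sub_left {F F' G : Rd d → V} (hF : LL ρ F) (hF' : LL ρ F') (hG : LL ρ G) (t : Rd d) :
    BB ρ t (fun z => F z - F' z) G = BB ρ t F G - BB ρ t F' G := by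
  rw [BB, BB, BB, ← (summable_BB hF hG t).tsum_sub (summable_BB hF' hG t)]
  refine tsum_congr fun x => ?_
  rw [map_sub, inner_sub_right]

lemma BB_sub_right {F F' G : Rd d → V} (hF : LL ρ F) (hF' : LL ρ F') (hG : LL ρ G) (t : Rd d) :
    BB ρ t G (fun z => F z - F' z) = BB ρ t G F - BB ρ t G F' := by
  rw [BB, BB, BB, ← (summable_BB hG hF t).tsum_sub (summable_BB hG hF' t)]
  refine tsum_congr fun x => ?_
  rw [map_sub, inner_sub_left]

lemma BB_conj (F G : Rd d → V) (t : Rd d) :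
    (starRingEnd ℂ) (BB ρ t F G) = BB ρ t G F := by
  rw [BB, BB, Complex.conj_tsum]
  refine tsum_congr fun x => ?_
  rw [inner_conj_symm]

lemma BB_shift (F G : Rd d → V) (t k : Rd d) :
    BB ρ t (fun z => F (z + k)) (fun z => G (z + k)) = BB ρ (t + k) F G := by
  rw [BB, BB, ← (Equiv.subRight k).tsum_eq]
  refine tsum_congr fun x => ?_
  simp only [Equiv.subRight_apply, sub_add_cancel]
  have : x - k - t = x - (t + k) := by abel
  rw [this]

lemma BB_self_re {F : Rd d → V} (hF : LL ρ F) (t : Rd d) :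
    (BB ρ t F F).re = ∑' x, ‖ρ (x - t) (F x)‖ ^ 2 := by
  rw [BB, Complex.re_tsum (summable_BB hF hF t)]
  refine tsum_congr fun x => ?_
  rw [inner_self_eq_norm_sq_to_K]
  norm_cast

lemma BB_self_lower {F : Rd d → V} (hF : LL ρ F) {κ : ℝ} (hκ0 : 0 ≤ κ)
    (hκ : ∀ p, κ * ‖p‖ ≤ ‖ρ 0 p‖) (x : Rd d) :
    κ ^ 2 * ‖F x‖ ^ 2 ≤ (BB ρ x F F).re := by
  rw [BB_self_re hF]
  refine le_trans ?_ ((hF x).le_tsum x (fun _ _ => by positivity))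
  rw [sub_self, ← mul_pow]
  exact pow_le_pow_left₀ (by positivity) (hκ _) 2

lemma BB_self_nonneg {F : Rd d → V} (hF : LL ρ F) (x : Rd d) : 0 ≤ (BB ρ x F F).re := by
  rw [BB_self_re hF]
  exact tsum_nonneg fun _ => by positivity

lemma BB_par {F G : Rd d → V} (hF : LL ρ F) (hG : LL ρ G) (t : Rd d) :
    (BB ρ t (fun z => F z - G z) (fun z => F z - G z)).re ≤
      2 * ((BB ρ t F F).re + (BB ρ t G G).re) := by
  rw [BB_self_re (hF.sub hG), BB_self_re hF, BB_self_re hG, ← (hF t).tsum_add (hG t),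
    ← tsum_mul_left]
  refine Summable.tsum_le_tsum (fun x => ?_) ((hF.sub hG) t) (((hF t).add (hG t)).mul_left 2)
  rw [map_sub]
  have := parallelogram_law_with_norm ℂ (ρ (x - t) (F x)) (ρ (x - t) (G x))
  nlinarith [norm_nonneg (ρ (x - t) (F x) + ρ (x - t) (G x))]

/-- bounded functions supported in `Λ0`. -/
structure BdOn (Λ0 : Set (Rd d)) (C : ℝ) (F : Rd d → V) : Prop where
  supp : ∀ x, F x ≠ 0 → x ∈ Λ0
  bd : ∀ x, ‖F x‖ ≤ C

variable {Λ0 : Set (Rd d)} {C : ℝ}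

lemma BdOn.LL {F : Rd d → V} (hF : BdOn Λ0 C F)
    (hsum : ∀ t, Summable (Λ0.indicator fun x => ‖ρ (x - t)‖ ^ 2)) : LL ρ F := by
  intro t
  refine Summable.of_nonneg_of_le (fun _ => by positivity) (fun x => ?_) ((hsum t).mul_left (C ^ 2))
  by_cases hx : x ∈ Λ0
  · rw [indicator_of_mem hx, ← mul_pow]
    refine pow_le_pow_left₀ (norm_nonneg _) ?_ 2
    rw [mul_comm]
    refine ((ρ (x - t)).le_opNorm _).trans ?_
    gcongr; exact hF.bd x
  · have : F x = 0 := by by_contra h; exact hx (hF.supp x h)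
    simp [this, hx]

lemma BB_tendsto {ι : Type*} {l : Filter ι} {Fi : ι → Rd d → V} {F G : Rd d → V}
    (hsum : ∀ t, Summable (Λ0.indicator fun x => ‖ρ (x - t)‖ ^ 2))
    (hG : BdOn Λ0 C G) (hFi : ∀ i x, ‖Fi i x‖ ≤ C) (hlim : ∀ x, Tendsto (fun i => Fi i x) l (𝓝 (F x)))
    (t : Rd d) : Tendsto (fun i => BB ρ t (Fi i) G) l (𝓝 (BB ρ t F G)) := by
  refine tendsto_tsum_of_dominated_convergence ((hsum t).mul_left (C * C)) (fun x => ?_)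
    (Eventually.of_forall fun i x => ?_)
  · exact Filter.Tendsto.inner tendsto_const_nhds (((ρ (x - t)).continuous.tendsto _).comp (hlim x))
  · by_cases hx : x ∈ Λ0
    · rw [indicator_of_mem hx]
      refine (norm_inner_le_norm _ _).trans ?_
      have h1 : ‖ρ (x - t) (G x)‖ ≤ ‖ρ (x - t)‖ * C :=
        ((ρ (x - t)).le_opNorm _).trans (by gcongr; exact hG.bd x)
      have h2 : ‖ρ (x - t) (Fi i x)‖ ≤ ‖ρ (x - t)‖ * C :=
        ((ρ (x - t)).le_opNorm _).trans (by gcongr; exact hFi i x)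
      calc _ ≤ (‖ρ (x - t)‖ * C) * (‖ρ (x - t)‖ * C) := by
            apply mul_le_mul h1 h2 (norm_nonneg _) ((norm_nonneg _).trans h1)
        _ = _ := by ring
    · have : G x = 0 := by by_contra h; exact hx (hG.supp x h)
      simp [this, hx]

structure Good (ρ : Rd d → V →L[ℂ] W) (Λ0 : Set (Rd d)) (c C : ℝ) (P : Rd d → V) : Prop where
  bd : BdOn Λ0 C P
  low : ∀ x, P x ≠ 0 → c ≤ ‖P x‖
  g1 : ∀ h t, BB ρ t (fun z => P (z + h)) P = BB ρ 0 (fun z => P (z + h)) P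
  g2 : ∀ z, ∀ ε > (0:ℝ), ∀ᶠ h in bohr d, P (z + h) ≠ 0 → ‖P (z + h) - P z‖ < ε
  g3 : ∀ x, P x ≠ 0 → ∀ U ∈ bohr d, RelDense {h | h ∈ U ∧ P (x + h) ≠ 0}

open Classical in
lemma good_step {c κ η : ℝ} (hc : 0 < c) (hκ0 : 0 < κ) (hκ : ∀ p, κ * ‖p‖ ≤ ‖ρ 0 p‖)
    (hη : 0 < η) (hΛ : ∀ x ∈ Λ0, ∀ y ∈ Λ0, x ≠ y → η ≤ dist x y)
    (hsum : ∀ t, Summable (Λ0.indicator fun x => ‖ρ (x - t)‖ ^ 2))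
    {P : Rd d → V} (hP : Good ρ Λ0 c C P) {x0 : Rd d} (hx0 : P x0 ≠ 0) :
    ∃ S : Set (Rd d), IsFUL S ∧ (∀ z ∈ S, P z ≠ 0) ∧ Good ρ Λ0 c C (Sᶜ.indicator P) ∧
      (BB ρ 0 (Sᶜ.indicator P) (Sᶜ.indicator P)).re + κ ^ 2 * c ^ 2 ≤ (BB ρ 0 P P).re := by
  obtain ⟨𝒰, hUb, hUT, hUaff⟩ := exists_ultra (T := {h | P (x0 + h) ≠ 0}) (hP.g3 x0 hx0)
  set S : Set (Rd d) := {z | ∀ᶠ h in 𝒰, P (z + h) ≠ 0} with hSdef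
  have hx0S : x0 ∈ S := hUT
  -- generic limit lemma
  have gen : ∀ z, ∀ σ : Rd d → Rd d, Tendsto σ (𝒰 : Filter (Rd d)) (bohr d) →
      (∀ᶠ h in 𝒰, P (z + σ h) ≠ 0) → Tendsto (fun h => P (z + σ h)) 𝒰 (𝓝 (P z)) := by
    intro z σ hσ hz
    rw [Metric.tendsto_nhds]
    intro ε hε
    filter_upwards [hz, hσ.eventually (hP.g2 z ε hε)] with h h1 h2
    rw [dist_eq_norm]; exact h2 h1
  have hSP : ∀ z ∈ S, P z ≠ 0 := by
    intro z hz hz0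
    have h1 := (gen z id hUb hz).norm
    have h2 : c ≤ ‖P z‖ := ge_of_tendsto h1 (Filter.Eventually.mono hz fun h hh => hP.low _ hh)
    rw [hz0, norm_zero] at h2; linarith
  set Q : Rd d → V := S.indicator P with hQdef
  have hQP : ∀ z, Tendsto (fun h => P (z + h)) 𝒰 (𝓝 (Q z)) := by
    intro z
    by_cases hz : z ∈ S
    · rw [hQdef, indicator_of_mem hz]; exact gen z id hUb hz
    · rw [hQdef, indicator_of_notMem hz]
      have : ∀ᶠ h in 𝒰, P (z + h) = 0 := by
        have := Ultrafilter.eventually_not.2 hz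
        filter_upwards [this] with h hh
        simpa using hh
      exact tendsto_const_nhds.congr' (this.mono fun h hh => hh.symm)
  have ind_bd : ∀ T : Set (Rd d), BdOn Λ0 C (T.indicator P) := by
    intro T
    refine ⟨fun x hx => hP.bd.supp x ?_, fun x => (norm_indicator_le_norm_self P x).trans (hP.bd.bd x)⟩
    intro h; apply hx; rw [indicator_apply, h, ite_self]
  have hQbd : BdOn Λ0 C Q := ind_bd S
  have hQne : ∀ z, Q z ≠ 0 ↔ z ∈ S := by
    intro z
    by_cases hz : z ∈ S
    · simp [hQdef, hz, hSP z hz]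
    · simp [hQdef, hz]
  have LQ : LL ρ Q := hQbd.LL hsum
  have LP : LL ρ P := hP.bd.LL hsum
  -- (1)
  have e1 : ∀ k t, BB ρ t (fun z => Q (z + k)) P = BB ρ 0 (fun z => Q (z + k)) P := by
    intro k t
    have h1 : ∀ t, Tendsto (fun h => BB ρ t (fun z => P (z + (k + h))) P) 𝒰
        (𝓝 (BB ρ t (fun z => Q (z + k)) P)) := fun t =>
      BB_tendsto hsum hP.bd (fun i x => hP.bd.bd _) (fun x => by
        simpa only [add_assoc] using hQP (x + k)) t
    refine tendsto_nhds_unique (h1 t) ((h1 0).congr fun h => (hP.g1 _ t).symm)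
  -- BB t Q P_h is independent of t
  have e1' : ∀ k t, BB ρ t Q (fun z => P (z + k)) = BB ρ 0 Q (fun z => P (z + k)) := by
    intro k t
    have h1 : ∀ t, BB ρ t Q (fun z => P (z + k)) = BB ρ (t + k) (fun z => Q (z + -k)) P := by
      intro t
      rw [← BB_shift]; simp
    rw [h1, h1, e1, ← e1 (-k) (0 + k)]
  have lim2 : ∀ k t, Tendsto (fun h => BB ρ t Q (fun z => P (z + (k + h)))) 𝒰
        (𝓝 (BB ρ t Q (fun z => Q (z + k)))) := by
    intro k t
    have h1 : Tendsto (fun h => BB ρ t (fun z => P (z + (k + h))) Q) 𝒰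
        (𝓝 (BB ρ t (fun z => Q (z + k)) Q)) :=
      BB_tendsto hsum hQbd (fun i x => hP.bd.bd _) (fun x => by
        simpa only [add_assoc] using hQP (x + k)) t
    have h2 := (Complex.continuous_conj.tendsto _).comp h1
    rw [BB_conj] at h2
    refine h2.congr fun h => ?_
    simp only [Function.comp_apply, BB_conj]
  -- (2)
  have e2 : ∀ k t, BB ρ t Q (fun z => Q (z + k)) = BB ρ 0 Q (fun z => Q (z + k)) := by
    intro k t
    exact tendsto_nhds_unique (lim2 k t) ((lim2 k 0).congr fun h => (e1' _ t).symm)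
  have e2' : ∀ k t, BB ρ t (fun z => Q (z + k)) Q = BB ρ 0 (fun z => Q (z + k)) Q := by
    intro k t
    rw [← BB_conj, e2, BB_conj]
  have e2'' : ∀ k j t, BB ρ t (fun z => Q (z + k)) (fun z => Q (z + j)) =
      BB ρ 0 (fun z => Q (z + k)) (fun z => Q (z + j)) := by
    intro k j t
    have h1 : ∀ t, BB ρ t (fun z => Q (z + k)) (fun z => Q (z + j)) =
        BB ρ (t + j) (fun z => Q (z + (k - j))) Q := by
      intro t
      rw [← BB_shift]; congr 1; ext z; congr 1; abel
    rw [h1, h1, e2', ← e2' _ (0 + j)]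
  set N := BB ρ 0 Q Q with hN
  have eN : ∀ t, BB ρ t Q Q = N := by
    intro t; have := e2 0 t; simpa using this
  have Nconj : (starRingEnd ℂ) N = N := by rw [hN, BB_conj]
  -- (3)
  have hUneg : Tendsto (fun h : Rd d => -h) (𝒰 : Filter (Rd d)) (bohr d) :=
    tendsto_neg_bohr.mono_left hUb
  set S' : Set (Rd d) := {z | ∀ᶠ h in 𝒰, Q (z + -h) ≠ 0} with hS'def
  set Q' : Rd d → V := S'.indicator P with hQ'def
  have hQ'bd : BdOn Λ0 C Q' := ind_bd S'
  have LQ' : LL ρ Q' := hQ'bd.LL hsum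
  have hQQ' : ∀ z, Tendsto (fun h => Q (z + -h)) 𝒰 (𝓝 (Q' z)) := by
    intro z
    by_cases hz : z ∈ S'
    · rw [hQ'def, indicator_of_mem hz]
      have h1 : ∀ᶠ h in 𝒰, Q (z + -h) = P (z + -h) := by
        refine Filter.Eventually.mono hz fun h hh => ?_
        rw [hQdef, indicator_of_mem ((hQne _).1 hh)]
      refine (gen z (fun h => -h) hUneg ?_).congr' (h1.mono fun h hh => hh.symm)
      filter_upwards [h1, hz] with h hh hh2
      rw [← hh]; exact hh2
    · rw [hQ'def, indicator_of_notMem hz]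
      have : ∀ᶠ h in 𝒰, Q (z + -h) = 0 := by
        have := Ultrafilter.eventually_not.2 hz
        filter_upwards [this] with h hh
        simpa using hh
      exact tendsto_const_nhds.congr' (this.mono fun h hh => hh.symm)
  have eQ'P : ∀ T : Set (Rd d), ∀ t, BB ρ t (T.indicator P) P =
      BB ρ t (T.indicator P) (T.indicator P) := by
    intro T t
    refine tsum_congr fun x => ?_
    by_cases hx : x ∈ T <;> simp [hx]
  have eQ' : BB ρ 0 Q' Q' = N := by
    rw [← eQ'P S' 0]
    have h1 : Tendsto (fun h => BB ρ 0 (fun z => Q (z + -h)) P) 𝒰 (𝓝 (BB ρ 0 Q' P)) :=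
      BB_tendsto hsum hP.bd (fun i x => hQbd.bd _) hQQ' 0
    have h2 : Tendsto (fun h => BB ρ 0 Q (fun z => P (z + h))) 𝒰 (𝓝 N) := by
      simpa using lim2 0 0
    refine tendsto_nhds_unique h1 (h2.congr fun h => ?_)
    rw [← e1' h (0 + -h), ← BB_shift]
    simp
  -- (4)
  have hD : Tendsto (fun h => BB ρ 0 (fun z => Q (z + -h) - Q' z) (fun z => Q (z + -h) - Q' z))
      𝒰 (𝓝 0) := by
    have h1 : Tendsto (fun h => BB ρ 0 (fun z => Q (z + -h)) Q') 𝒰 (𝓝 N) := by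
      rw [← eQ']
      exact BB_tendsto hsum hQ'bd (fun i x => hQbd.bd _) hQQ' 0
    have h2 : Tendsto (fun h => BB ρ 0 Q' (fun z => Q (z + -h))) 𝒰 (𝓝 N) := by
      have h2 := (Complex.continuous_conj.tendsto _).comp h1
      rw [Nconj] at h2
      refine h2.congr fun h => ?_
      simp only [Function.comp_apply, BB_conj]
    have h3 : Tendsto (fun h => (N - BB ρ 0 Q' (fun z => Q (z + -h))) -
        (BB ρ 0 (fun z => Q (z + -h)) Q' - N)) 𝒰 (𝓝 ((N - N) - (N - N))) :=
      (tendsto_const_nhds.sub h2).sub (h1.sub tendsto_const_nhds)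
    simp only [sub_self] at h3
    refine h3.congr fun h => ?_
    rw [BB_sub_right (LQ.shift (-h)) LQ' ((LQ.shift (-h)).sub LQ'), BB_sub_left (LQ.shift (-h)) LQ' (LQ.shift (-h)),
      BB_sub_left (LQ.shift (-h)) LQ' LQ', eQ', BB_shift, eN]
  have hA : ∀ᶠ h in 𝒰, (BB ρ 0 (fun z => Q (z + -h) - Q' z) (fun z => Q (z + -h) - Q' z)).re
      < κ ^ 2 * c ^ 2 / 4 := by
    have := (Complex.continuous_re.tendsto _).comp hD
    exact this.eventually (gt_mem_nhds (by simp; positivity))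
  set A := {h | (BB ρ 0 (fun z => Q (z + -h) - Q' z) (fun z => Q (z + -h) - Q' z)).re
      < κ ^ 2 * c ^ 2 / 4} with hAdef
  have hAQ : ∀ h ∈ A, ∀ h' ∈ A, ∀ z, ‖Q (z + -h) - Q (z + -h')‖ < c := by
    intro h hh h' hh' z
    have L1 := LQ.shift (-h)
    have L2 := LQ.shift (-h')
    have tind : ∀ t, BB ρ t (fun z => Q (z + -h) - Q (z + -h')) (fun z => Q (z + -h) - Q (z + -h')) =
        BB ρ 0 (fun z => Q (z + -h) - Q (z + -h')) (fun z => Q (z + -h) - Q (z + -h')) := by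
      intro t
      rw [BB_sub_right L1 L2 (L1.sub L2), BB_sub_left L1 L2 L1, BB_sub_left L1 L2 L2,
        BB_sub_right L1 L2 (L1.sub L2), BB_sub_left L1 L2 L1, BB_sub_left L1 L2 L2,
        e2'' _ _ t, e2'' _ _ t, e2'' _ _ t, e2'' _ _ t]
    have h1 := BB_par (L1.sub LQ') (L2.sub LQ') 0
    simp only [sub_sub_sub_cancel_right] at h1
    have h2 := BB_self_lower (L1.sub L2) hκ0.le hκ z
    rw [tind] at h2
    simp only [hAdef, mem_setOf_eq] at hh hh'
    have h3 : κ ^ 2 * ‖Q (z + -h) - Q (z + -h')‖ ^ 2 < κ ^ 2 * c ^ 2 := by linarith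
    have h4 := lt_of_mul_lt_mul_left h3 (by positivity)
    exact lt_of_pow_lt_pow_left₀ 2 hc.le h4
  have hQlow : ∀ z, Q z ≠ 0 → c ≤ ‖Q z‖ := by
    intro z hz
    have := (hQne z).1 hz
    rw [hQdef, indicator_of_mem this]; exact hP.low _ (hSP z this)
  have hAS : ∀ h ∈ A, ∀ h' ∈ A, ∀ z, z + -h ∈ S → z + -h' ∈ S := by
    intro h hh h' hh' z hz
    rw [← hQne] at hz ⊢
    intro h0
    have h1 := hAQ h hh h' hh' z
    rw [h0, sub_zero] at h1
    linarith [hQlow _ hz]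
  let H : AddSubgroup (Rd d) :=
    { carrier := {k | ∀ w, w + k ∈ S ↔ w ∈ S}
      zero_mem' := by simp
      add_mem' := by
        intro a b ha hb w
        simp only [mem_setOf_eq] at ha hb
        rw [← add_assoc, hb, ha]
      neg_mem' := by
        intro a ha w
        simp only [mem_setOf_eq] at ha
        rw [← ha (w + -a)]; simp }
  have hHmem : ∀ k, k ∈ H ↔ ∀ w, w + k ∈ S ↔ w ∈ S := fun k => Iff.rfl
  have hSΛ : ∀ z ∈ S, z ∈ Λ0 := fun z hz => hP.bd.supp z (hSP z hz)
  have hAH : ∀ h ∈ A, ∀ h' ∈ A, h - h' ∈ H := by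
    intro h hh h' hh' w
    constructor
    · intro hw
      have := hAS h' hh' h hh (w + h) (by convert hw using 1; abel)
      simpa using this
    · intro hw
      have := hAS h hh h' hh' (w + h) (by simpa using hw)
      convert this using 1; abel
  have hHd : ∀ k ∈ H, k ≠ 0 → η ≤ ‖k‖ := by
    intro k hk hk0
    have h1 := hΛ (x0 + k) (hSΛ _ ((hk x0).2 hx0S)) x0 (hSΛ _ hx0S) (by simpa using hk0)
    simpa [dist_eq_norm] using h1
  have hspan : Submodule.span ℝ (H : Set (Rd d)) = ⊤ := by
    obtain ⟨a, ha⟩ := 𝒰.nonempty_of_mem hA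
    exact hUaff A hA _ a fun h hh => Submodule.subset_span (hAH h hh a ha)
  obtain ⟨b, hbH, hlat⟩ := lattice_basis H hη hHd hspan
  have hnear : ∀ᶠ h in bohr d, ∀ z, P z ≠ 0 → P (z + h) ≠ 0 → (z ∈ S ↔ z + h ∈ S) := by
    filter_upwards [bohr_near_lattice H b hbH hη] with h ⟨k, hk, hhk⟩ z hz hzh
    constructor
    · intro hzS
      have h1 := (hk z).2 hzS
      by_contra hne
      have h2 : z + h ≠ z + k := fun h => hne (h ▸ h1)
      have := hΛ _ (hP.bd.supp _ hzh) _ (hSΛ _ h1) h2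
      rw [dist_add_left, dist_eq_norm] at this
      linarith
    · intro hzS
      have h1 : z + h + -k ∈ S := (H.neg_mem hk (z + h)).2 hzS
      by_contra hne
      have h2 : z + h + -k ≠ z := fun h => hne (h ▸ h1)
      have := hΛ _ (hSΛ _ h1) _ (hP.bd.supp _ hz) h2
      have h3 : z + h + -k - z = h - k := by abel
      rw [dist_eq_norm, h3] at this
      linarith
  have hRQ : Sᶜ.indicator P = fun z => P z - Q z := by
    ext z
    by_cases hz : z ∈ S <;> simp [hQdef, hz]
  refine ⟨S, stab_FUL hη (fun x hx y hy => hΛ x (hSΛ x hx) y (hSΛ y hy)) H (fun k hk => hk) b hbH hlat,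
    hSP, ⟨ind_bd _, ?_, ?_, ?_, ?_⟩, ?_⟩
  · intro x hx
    have hxS : x ∈ Sᶜ := mem_of_indicator_ne_zero hx
    rw [indicator_of_mem hxS] at hx ⊢
    exact hP.low x hx
  · intro h t
    have eP : ∀ t, BB ρ t (fun z => P (z + h)) Q = BB ρ 0 (fun z => P (z + h)) Q := by
      intro t; rw [← BB_conj, e1', BB_conj]
    rw [hRQ]
    have LPh := LP.shift h
    have LQh := LQ.shift h
    simp only
    rw [BB_sub_right LP LQ (LPh.sub LQh), BB_sub_left LPh LQh LP, BB_sub_left LPh LQh LQ,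
      BB_sub_right LP LQ (LPh.sub LQh), BB_sub_left LPh LQh LP, BB_sub_left LPh LQh LQ,
      hP.g1 h t, e1 h t, e2' h t, eP t]
  · intro z ε hε
    filter_upwards [hnear, hP.g2 z ε hε] with h h1 h2 h3
    have hxS : z + h ∈ Sᶜ := mem_of_indicator_ne_zero h3
    rw [indicator_of_mem hxS] at h3 ⊢
    have h4 : Sᶜ.indicator P z = P z := by
      by_cases hz : P z = 0
      · rw [indicator_apply, hz, ite_self]
      · have : z ∈ Sᶜ := fun hzS => hxS ((h1 z hz h3).1 hzS)
        rw [indicator_of_mem this]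
    rw [h4]; exact h2 h3
  · intro x hx U hU
    have hxS : x ∈ Sᶜ := mem_of_indicator_ne_zero hx
    rw [indicator_of_mem hxS] at hx
    obtain ⟨R, hR, hR2⟩ := hP.g3 x hx _ (inter_mem hU hnear)
    refine ⟨R, hR, fun y => ?_⟩
    obtain ⟨a, ⟨⟨ha1, ha2⟩, ha3⟩, hya⟩ := hR2 y
    refine ⟨a, ⟨ha1, ?_⟩, hya⟩
    have : x + a ∈ Sᶜ := fun h => hxS ((ha2 x hx ha3).2 h)
    rw [indicator_of_mem this]; exact ha3
  · have h1 := BB_self_lower LQ hκ0.le hκ x0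
    rw [eN] at h1
    have h2 := hQlow x0 ((hQne x0).2 hx0S)
    have h3 : κ ^ 2 * c ^ 2 ≤ N.re := le_trans (by gcongr) h1
    have h4 : BB ρ 0 Q P = N := eQ'P S 0
    have h5 : BB ρ 0 P Q = N := by rw [← BB_conj, h4, Nconj]
    rw [hRQ, BB_sub_right LP LQ (LP.sub LQ), BB_sub_left LP LQ LP, BB_sub_left LP LQ LQ, h4, h5, ← hN]
    simp only [Complex.sub_re]
    linarith

theorem good_FUL {c κ η : ℝ} (hc : 0 < c) (hκ0 : 0 < κ) (hκ : ∀ p, κ * ‖p‖ ≤ ‖ρ 0 p‖)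
    (hη : 0 < η) (hΛ : ∀ x ∈ Λ0, ∀ y ∈ Λ0, x ≠ y → η ≤ dist x y)
    (hsum : ∀ t, Summable (Λ0.indicator fun x => ‖ρ (x - t)‖ ^ 2))
    {P : Rd d → V} (hP : Good ρ Λ0 c C P) : IsFUL {x | P x ≠ 0} := by
  classical
  have main : ∀ n : ℕ, ∀ P : Rd d → V, Good ρ Λ0 c C P → (BB ρ 0 P P).re < n * (κ ^ 2 * c ^ 2) →
      IsFUL {x | P x ≠ 0} := by
    intro n
    induction n with
    | zero =>
      intro P hP h
      have := BB_self_nonneg (hP.bd.LL hsum) 0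
      simp at h; linarith
    | succ n ih =>
      intro P hP h
      by_cases hne : ∃ x0, P x0 ≠ 0
      · obtain ⟨x0, hx0⟩ := hne
        obtain ⟨S, hS1, hS2, hS3, hS4⟩ := good_step hc hκ0 hκ hη hΛ hsum hP hx0
        have h1 := ih _ hS3 (by push_cast at h; linarith)
        convert hS1.union h1 using 1
        ext x
        by_cases hx : x ∈ S
        · simp [hx, hS2 x hx]
        · simp [hx]
      · push Not at hne
        convert IsFUL.empty using 1
        ext x; simp [hne x]
  have hpos : 0 < κ ^ 2 * c ^ 2 := by positivity
  obtain ⟨n, hn⟩ := exists_nat_gt ((BB ρ 0 P P).re / (κ ^ 2 * c ^ 2))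
  exact main n P hP (by rwa [div_lt_iff₀ hpos] at hn)

end PartTwo

section Ops
variable {d : ℕ}

abbrev SS (d : ℕ) : Type := SchwartzMap (Rd d) ℂ

open LineDeriv

def dL (a : Fin d → ℂ) (i : Fin d) : SS d →L[ℂ] SS d :=
  lineDerivOpCLM ℂ (SS d) (EuclideanSpace.single i (1:ℝ)) + a i • (1 : SS d →L[ℂ] SS d)

def DS (a : Fin d → ℂ) (k : Fin d → ℕ) : SS d →L[ℂ] SS d :=
  ((List.finRange d).map fun i => dL a i ^ k i).prod

lemma dL_apply (a : Fin d → ℂ) (i : Fin d) (φ : SS d) (x : Rd d) :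
    dL a i φ x = pderiv' i φ x + a i * φ x := by
  simp only [dL, ContinuousLinearMap.add_apply, SchwartzMap.add_apply, lineDerivOpCLM_apply,
    lineDerivOp_apply_eq_fderiv, ContinuousLinearMap.smul_apply, SchwartzMap.smul_apply,
    ContinuousLinearMap.one_apply, smul_eq_mul, pderiv']

lemma Dmulti_intertwine (Ψ : SS d → Rd d → ℂ) (a : Fin d → ℂ)
    (h : ∀ i φ, pderiv' i (Ψ φ) = Ψ (dL a i φ)) (k : Fin d → ℕ) (φ : SS d) :
    Dmulti k (Ψ φ) = Ψ (DS a k φ) := by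
  have h1 : ∀ i n φ, (pderiv' i)^[n] (Ψ φ) = Ψ ((dL a i ^ n) φ) := by
    intro i n
    induction n with
    | zero => intro φ; rfl
    | succ n ih =>
      intro φ
      rw [Function.iterate_succ_apply, h, ih, pow_succ]; rfl
  unfold Dmulti DS
  generalize List.finRange d = l
  induction l with
  | nil => rfl
  | cons i l ih =>
    simp only [List.map_cons, List.foldr_cons, List.prod_cons, Function.comp_apply] at ih ⊢
    rw [ih, h1]; rfl

lemma Dmulti_eq (k : Fin d → ℕ) (φ : SS d) : Dmulti k φ = DS 0 k φ := by
  refine Dmulti_intertwine (fun φ => ⇑φ) 0 (fun i φ => ?_) k φ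
  ext x; rw [dL_apply]; simp

/-- translation -/
abbrev tr (t : Rd d) : SS d →L[ℂ] SS d := compSubConstCLM ℂ t

lemma tr_apply (t : Rd d) (φ : SS d) (x : Rd d) : tr t φ x = φ (x - t) := rfl

lemma DS_tr (k : Fin d → ℕ) (t : Rd d) (φ : SS d) (x : Rd d) :
    DS 0 k (tr t φ) x = DS 0 k φ (x - t) := by
  rw [← Dmulti_eq]
  have := Dmulti_intertwine (fun φ : SS d => ⇑(tr t φ)) 0 (fun i φ => ?_) k φ
  · rw [this]; rfl
  · ext x
    rw [tr_apply, dL_apply]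
    simp only [pderiv', Pi.zero_apply, zero_mul, add_zero]
    have : (fun y => φ (y - t)) = ⇑(tr t φ) := rfl
    rw [← this, fderiv_comp_sub]

def expL (a : Fin d → ℂ) (y : Rd d) : ℂ := Complex.exp (∑ i, a i * (y i : ℂ))

lemma expL_contDiff (a : Fin d → ℂ) : ContDiff ℝ (⊤ : ℕ∞) (expL a) := by
  unfold expL
  refine ContDiff.cexp ?_
  refine ContDiff.sum fun i _ => ?_
  refine contDiff_const.mul ?_
  exact Complex.ofRealCLM.contDiff.comp (EuclideanSpace.proj (𝕜 := ℝ) i).contDiff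

lemma pderiv_expL (a : Fin d → ℂ) (i : Fin d) (x : Rd d) : pderiv' i (expL a) x = a i * expL a x := by
  have h1 : HasFDerivAt (fun y : Rd d => ∑ j, a j * (y j : ℂ))
      (∑ j, a j • (Complex.ofRealCLM.comp (EuclideanSpace.proj (𝕜 := ℝ) j : Rd d →L[ℝ] ℝ))) x := by
    have : (fun y : Rd d => ∑ j, a j * (y j : ℂ)) =
        ⇑(∑ j, a j • (Complex.ofRealCLM.comp (EuclideanSpace.proj (𝕜 := ℝ) j : Rd d →L[ℝ] ℝ))) := by
      ext y; simp [ContinuousLinearMap.sum_apply]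
    rw [this]
    exact ContinuousLinearMap.hasFDerivAt _
  have h2 := h1.cexp
  rw [pderiv']
  unfold expL
  rw [h2.fderiv]
  simp [ContinuousLinearMap.sum_apply, Pi.single_apply]
  rw [mul_comm]
  congr 1
  rw [Finset.sum_eq_single i]
  · simp
  · intro b _ hb; simp [hb]
  · simp

lemma Dmulti_expL (a : Fin d → ℂ) (k : Fin d → ℕ) (φ : SS d) (x : Rd d) :
    Dmulti k (fun y => expL a y * φ y) x = expL a x * DS a k φ x := by
  have := Dmulti_intertwine (fun φ : SS d => fun y => expL a y * φ y) a (fun i φ => ?_) k φ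
  · rw [this]
  · ext x
    rw [dL_apply]
    have h1 : DifferentiableAt ℝ (expL a) x := (expL_contDiff a).differentiable (by simp) x
    have h2 : DifferentiableAt ℝ φ x := φ.differentiableAt
    have h3 := pderiv_expL a i x
    simp only [pderiv'] at h3 ⊢
    rw [fderiv_fun_mul h1 h2]
    simp [h3]; ring

def aa (ζ : Rd d) : Fin d → ℂ := fun i => -(2 * Real.pi * Complex.I * (ζ i : ℂ))

lemma e2pi_eq_expL (ζ y : Rd d) : e2pi y (-ζ) = expL (aa ζ) y := by
  simp only [e2pi, expL, aa, inner_neg_right, PiLp.inner_apply, RCLike.inner_apply, conj_trivial]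
  congr 1
  push_cast
  rw [← Finset.sum_neg_distrib, Finset.mul_sum]
  refine Finset.sum_congr rfl fun i _ => ?_
  ring

/-- polynomial dependence of `DS` on the parameter -/
lemma DS_poly (a b : Fin d → ℂ) (k : Fin d → ℕ) : ∃ (n : ℕ) (c : ℕ → SS d →L[ℂ] SS d),
    ∀ s : ℂ, DS (fun i => a i + s * b i) k = ∑ j ∈ Finset.range n, s ^ j • c j := by
  let R := SS d →L[ℂ] SS d
  let q : Polynomial R := ((List.finRange d).map fun i =>
    (Polynomial.C (dL a i) + Polynomial.X * Polynomial.C (b i • (1 : R))) ^ k i).prod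
  refine ⟨q.natDegree + 1, q.coeff, fun s => ?_⟩
  have hc : ∀ r : R, Commute ((RingHom.id R) r) (s • (1 : R)) := fun r => by
    simp [Commute, SemiconjBy]
  let ev := Polynomial.eval₂RingHom' (RingHom.id R) (s • (1 : R)) hc
  have h1 : ev q = DS (fun i => a i + s * b i) k := by
    simp only [q, map_list_prod, List.map_map, DS]
    congr 1
    refine List.map_congr_left fun i _ => ?_
    simp only [Function.comp_apply, map_pow]
    congr 1
    simp only [ev, map_add, map_mul, Polynomial.eval₂RingHom'_apply, Polynomial.eval₂_C,
      Polynomial.eval₂_X, RingHom.id_apply, dL]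
    rw [add_smul, ← add_assoc]
    congr 1
    rw [smul_mul_smul_comm, one_mul]
  rw [← h1]
  simp only [ev, Polynomial.eval₂RingHom'_apply, Polynomial.eval₂_eq_sum_range, RingHom.id_apply]
  refine Finset.sum_congr rfl fun j _ => ?_
  rw [smul_pow, one_pow, mul_smul_comm, mul_one]

def wt (x : Rd d) : ℝ := ((1 + ‖x‖) ^ (d + 1))⁻¹

lemma wt_pos (x : Rd d) : 0 < wt x := by unfold wt; positivity

lemma wt_le_one (x : Rd d) : wt x ≤ 1 := by
  unfold wt
  exact inv_le_one_of_one_le₀ (one_le_pow₀ (by linarith [norm_nonneg x]))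

def qd (φ : SS d) : ℝ :=
  2 ^ (d + 1) * ∑ m ∈ Finset.Iic (d + 1, 0), SchwartzMap.seminorm ℂ m.1 m.2 φ

lemma qd_nonneg (φ : SS d) : 0 ≤ qd φ :=
  mul_nonneg (by positivity) (Finset.sum_nonneg fun _ _ => apply_nonneg _ _)

lemma continuous_qd : Continuous (qd (d := d)) := by
  unfold qd
  refine continuous_const.mul ?_
  refine continuous_finset_sum _ fun m _ => ?_
  exact (schwartz_withSeminorms ℂ (Rd d) ℂ).continuous_seminorm m

lemma norm_le_qd (φ : SS d) (x : Rd d) : ‖φ x‖ ≤ qd φ * wt x := by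
  have := one_add_le_sup_seminorm_apply (𝕜 := ℂ) (m := (d + 1, 0)) (k := d + 1) (n := 0) le_rfl le_rfl φ x
  rw [norm_iteratedFDeriv_zero] at this
  rw [wt, ← div_eq_mul_inv, le_div_iff₀ (by positivity), mul_comm]
  refine this.trans ?_
  unfold qd
  refine mul_le_mul_of_nonneg_left ?_ (by positivity)
  have h := Seminorm.finset_sup_le_sum (fun m : ℕ × ℕ => SchwartzMap.seminorm ℂ (E := Rd d) (F := ℂ) m.1 m.2) (Finset.Iic (d + 1, 0)) φ
  refine h.trans (le_of_eq ?_)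
  generalize Finset.Iic (d + 1, 0) = S
  induction S using Finset.induction_on with
  | empty => simp
  | insert a S ha ih => rw [Finset.sum_insert ha, Finset.sum_insert ha, Seminorm.add_apply, ih]

variable {K : ℕ}

abbrev VV (d K : ℕ) : Type := (mIdx d K) → ℂ

def rho (a : Fin d → ℂ) (g : SS d) (s : Rd d) : VV d K →L[ℂ] ℂ :=
  ∑ k : mIdx d K, ((-1 : ℂ) ^ (∑ i, k.1 i) * DS a k.1 g s) • ContinuousLinearMap.proj k

lemma rho_apply (a : Fin d → ℂ) (g : SS d) (s : Rd d) (p : VV d K) :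
    rho a g s p = ∑ k : mIdx d K, p k * ((-1 : ℂ) ^ (∑ i, k.1 i) * DS a k.1 g s) := by
  simp [rho, ContinuousLinearMap.sum_apply, mul_comm]

def qq (K : ℕ) (a : Fin d → ℂ) (g : SS d) : ℝ := ∑ k : mIdx d K, qd (DS a k.1 g)

lemma qq_nonneg (a : Fin d → ℂ) (g : SS d) : 0 ≤ qq K a g :=
  Finset.sum_nonneg fun _ _ => qd_nonneg _

lemma continuous_qq (a : Fin d → ℂ) : Continuous (qq (d := d) K a) :=
  continuous_finset_sum _ fun k _ => continuous_qd.comp (DS a k.1).continuous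

lemma rho_bound (a : Fin d → ℂ) (g : SS d) (s : Rd d) (p : VV d K) :
    ‖rho a g s p‖ ≤ ‖p‖ * qq K a g * wt s := by
  rw [rho_apply, qq, Finset.mul_sum, Finset.sum_mul]
  refine norm_sum_le_of_le _ fun k _ => ?_
  rw [norm_mul, norm_mul, norm_pow, norm_neg, norm_one, one_pow, one_mul, mul_assoc]
  exact mul_le_mul (norm_le_pi_norm p k) (norm_le_qd _ _) (norm_nonneg _) (norm_nonneg _)

lemma rho_opNorm (a : Fin d → ℂ) (g : SS d) (s : Rd d) :
    ‖(rho a g s : VV d K →L[ℂ] ℂ)‖ ≤ qq K a g * wt s := by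
  refine ContinuousLinearMap.opNorm_le_bound _ (mul_nonneg (qq_nonneg _ _) (wt_pos s).le) fun p => ?_
  refine (rho_bound a g s p).trans (le_of_eq (by ring))

lemma rho_tr (g : SS d) (t s : Rd d) : (rho 0 (tr t g) s : VV d K →L[ℂ] ℂ) = rho 0 g (s - t) := by
  simp [rho, DS_tr]

lemma rho_add_fun (a : Fin d → ℂ) (g g' : SS d) (s : Rd d) :
    (rho a (g + g') s : VV d K →L[ℂ] ℂ) = rho a g s + rho a g' s := by
  ext p
  rw [ContinuousLinearMap.add_apply, rho_apply, rho_apply, rho_apply, ← Finset.sum_add_distrib]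
  refine Finset.sum_congr rfl fun k _ => ?_
  rw [map_add, SchwartzMap.add_apply, mul_add, mul_add]

lemma rho_smul_fun (a : Fin d → ℂ) (c : ℂ) (g : SS d) (s : Rd d) :
    (rho a (c • g) s : VV d K →L[ℂ] ℂ) = c • rho a g s := by
  simp only [rho, map_smul, SchwartzMap.smul_apply, smul_eq_mul, Finset.smul_sum, smul_smul]
  refine Finset.sum_congr rfl fun k _ => ?_
  ring_nf

/-- modulated version -/
lemma rho_mod (ζ : Rd d) (g : SS d) (G : SS d) (hG : ∀ y, G y = e2pi y (-ζ) * g y) (s : Rd d) :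
    (rho 0 G s : VV d K →L[ℂ] ℂ) = e2pi s (-ζ) • rho (aa ζ) g s := by
  simp only [rho, Finset.smul_sum, smul_smul]
  refine Finset.sum_congr rfl fun k _ => ?_
  congr 1
  rw [← Dmulti_eq]
  have : (⇑G) = fun y => expL (aa ζ) y * g y := by
    ext y; rw [hG, e2pi_eq_expL]
  rw [this, Dmulti_expL, e2pi_eq_expL]; ring

end Ops

section UDsum
variable {d : ℕ}

lemma wt_integrable : Integrable (wt (d := d)) volume := by
  have h : ((Module.finrank ℝ (Rd d) : ℕ) : ℝ) < ((d + 1 : ℕ) : ℝ) := by simp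
  have := integrable_one_add_norm (μ := (volume : Measure (Rd d))) h
  refine this.congr (Eventually.of_forall fun x => ?_)
  simp only [wt]
  rw [Real.rpow_neg (by positivity), Real.rpow_natCast]

lemma wt_compare {η : ℝ} (hη : 0 < η) (x y t : Rd d) (h : dist y x < η) :
    wt (x - t) ≤ (1 + η) ^ (d + 1) * wt (y - t) := by
  unfold wt
  have h1 : 1 + ‖y - t‖ ≤ (1 + η) * (1 + ‖x - t‖) := by
    have : ‖y - t‖ ≤ ‖y - x‖ + ‖x - t‖ := by
      have := norm_add_le (y - x) (x - t); rwa [sub_add_sub_cancel] at this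
    rw [dist_eq_norm] at h
    nlinarith [norm_nonneg (x - t)]
  have h2 : (1 + ‖y - t‖) ^ (d+1) ≤ (1 + η) ^ (d+1) * (1 + ‖x - t‖) ^ (d+1) := by
    rw [← mul_pow]; exact pow_le_pow_left₀ (by positivity) h1 _
  rw [← div_eq_mul_inv, le_div_iff₀ (by positivity), inv_mul_le_iff₀ (by positivity)]
  linarith

lemma ud_sum {Λ0 : Set (Rd d)} {η : ℝ} (hη : 0 < η)
    (hΛ : ∀ x ∈ Λ0, ∀ y ∈ Λ0, x ≠ y → η ≤ dist x y) :
    ∃ M, 0 ≤ M ∧ ∀ t, Summable (Λ0.indicator fun x => wt (x - t)) ∧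
      ∑' x, Λ0.indicator (fun x => wt (x - t)) x ≤ M := by
  classical
  set v : ℝ := (volume : Measure (Rd d)).real (ball 0 (η/2)) with hv
  have hvpos : 0 < v := by
    rw [hv, measureReal_def]
    exact ENNReal.toReal_pos (measure_ball_pos _ _ (by positivity)).ne' measure_ball_lt_top.ne
  set M : ℝ := (1 + η/2) ^ (d + 1) * (∫ y : Rd d, wt y) / v with hM
  have hI : 0 ≤ ∫ y : Rd d, wt y := integral_nonneg fun y => (wt_pos y).le
  have hnn : ∀ t x, 0 ≤ Λ0.indicator (fun x => wt (x - t)) x := fun t x =>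
    indicator_nonneg (fun x _ => (wt_pos _).le) x
  have key : ∀ t, ∀ s : Finset (Rd d), ∑ x ∈ s, Λ0.indicator (fun x => wt (x - t)) x ≤ M := by
    intro t s
    have e1 : ∑ x ∈ s, Λ0.indicator (fun x => wt (x - t)) x = ∑ x ∈ s.filter (· ∈ Λ0), wt (x - t) := by
      rw [Finset.sum_filter]; rfl
    rw [e1]
    set s' := s.filter (· ∈ Λ0) with hs'
    have hint : Integrable (fun y : Rd d => wt (y - t)) := wt_integrable.comp_sub_right t
    have h1 : ∀ x ∈ s', wt (x - t) * v ≤ (1 + η/2) ^ (d + 1) * ∫ y in ball x (η/2), wt (y - t) := by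
      intro x _
      have hvx : v = (volume : Measure (Rd d)).real (ball x (η/2)) := by
        rw [hv, measureReal_def, measureReal_def, Measure.addHaar_ball_center _ x]
      rw [hvx, mul_comm, ← smul_eq_mul, ← setIntegral_const, ← integral_const_mul]
      refine setIntegral_mono_on ?_ (hint.integrableOn.const_mul _) measurableSet_ball ?_
      · exact integrableOn_const measure_ball_lt_top.ne
      · intro y hy
        exact wt_compare (by positivity) x y t hy
    have h2 : ∑ x ∈ s', ∫ y in ball x (η/2), wt (y - t) = ∫ y in ⋃ x ∈ s', ball x (η/2), wt (y - t) := by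
      rw [integral_biUnion_finset]
      · intro x _; exact measurableSet_ball
      · intro x hx y hy hxy
        refine ball_disjoint_ball ?_
        have := hΛ x (Finset.mem_filter.1 hx).2 y (Finset.mem_filter.1 hy).2 hxy
        linarith
      · intro x _; exact hint.integrableOn
    have h3 : ∫ y in ⋃ x ∈ s', ball x (η/2), wt (y - t) ≤ ∫ y : Rd d, wt y := by
      rw [← integral_sub_right_eq_self (fun y : Rd d => wt y) t]
      exact setIntegral_le_integral hint (Eventually.of_forall fun y => (wt_pos _).le)
    rw [hM, le_div_iff₀ hvpos, Finset.sum_mul]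
    refine (Finset.sum_le_sum h1).trans ?_
    rw [← Finset.mul_sum, h2]
    exact mul_le_mul_of_nonneg_left h3 (by positivity)
  refine ⟨M, by positivity, fun t => ⟨summable_of_sum_le (hnn t) (key t), ?_⟩⟩
  exact Real.tsum_le_of_sum_le (hnn t) (key t)

end UDsum

section Cut
variable {d : ℕ}

lemma nat_le_topw (n : ℕ) : (n : WithTop ℕ∞) ≤ ((⊤ : ℕ∞) : WithTop ℕ∞) := by exact_mod_cast le_top

def bump0 : ContDiffBump (0 : Rd d) := ⟨1, 2, by norm_num, by norm_num⟩

def chi (x : Rd d) : ℂ := ((bump0 (d := d) x : ℝ) : ℂ)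

lemma chi_contDiff : ContDiff ℝ (⊤ : ℕ∞) (chi (d := d)) :=
  Complex.ofRealCLM.contDiff.comp (bump0 (d := d)).contDiff

lemma chi_one {x : Rd d} (h : ‖x‖ ≤ 1) : chi x = 1 := by
  have := (bump0 (d := d)).one_of_mem_closedBall (x := x) (by simpa [bump0] using h)
  simp [chi, this]

lemma chi_zero {x : Rd d} (h : 2 ≤ ‖x‖) : chi x = 0 := by
  have := (bump0 (d := d)).zero_of_le_dist (x := x) (by simpa [bump0] using h)
  simp [chi, this]

lemma chi_compact : HasCompactSupport (chi (d := d)) :=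
  HasCompactSupport.of_support_subset_isCompact (isCompact_closedBall (0 : Rd d) 2) fun x hx => by
    by_contra h
    rw [mem_closedBall_zero_iff, not_le] at h
    exact hx (chi_zero h.le)

lemma chi_bound (n : ℕ) : ∃ C, 0 ≤ C ∧ ∀ x : Rd d, ‖iteratedFDeriv ℝ n chi x‖ ≤ C := by
  have h := (chi_compact (d := d)).iteratedFDeriv (𝕜 := ℝ) n
  have hc : Continuous (iteratedFDeriv ℝ n (chi (d := d))) :=
    chi_contDiff.continuous_iteratedFDeriv (by exact_mod_cast le_top)
  obtain ⟨C, hC⟩ := h.exists_bound_of_continuous hc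
  exact ⟨C, (norm_nonneg _).trans (hC 0), hC⟩

def cut (s : ℝ) (γ : Rd d) (x : Rd d) : ℂ := chi (s • (x - γ))

lemma cut_contDiff (s : ℝ) (γ : Rd d) : ContDiff ℝ (⊤ : ℕ∞) (cut s γ) :=
  by
  refine chi_contDiff.comp (f := fun x => s • (x - γ)) ?_
  fun_prop

lemma cut_bound (n : ℕ) : ∃ C, 0 ≤ C ∧ ∀ s, 0 ≤ s → ∀ γ x : Rd d,
    ‖iteratedFDeriv ℝ n (cut s γ) x‖ ≤ C * s ^ n := by
  obtain ⟨C, hC0, hC⟩ := chi_bound (d := d) n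
  refine ⟨C, hC0, fun s hs γ x => ?_⟩
  have h1 : cut s γ = fun x => (chi ∘ (s • ContinuousLinearMap.id ℝ (Rd d))) (x - γ) := by
    ext x; simp [cut]
  rw [h1, iteratedFDeriv_comp_sub, ContinuousLinearMap.iteratedFDeriv_comp_right (i := n) (n := (⊤:ℕ∞)) _ chi_contDiff _ (by exact_mod_cast le_top)]
  refine (ContinuousMultilinearMap.norm_compContinuousLinearMap_le _ _).trans ?_
  refine mul_le_mul (hC _) ?_ (by positivity) hC0
  rw [Finset.prod_const, Finset.card_univ, Fintype.card_fin]
  refine pow_le_pow_left₀ (norm_nonneg _) ?_ _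
  refine (norm_smul_le _ _).trans ?_
  rw [Real.norm_of_nonneg hs]
  exact mul_le_of_le_one_right hs ContinuousLinearMap.norm_id_le

lemma cut_one {s : ℝ} (hs : 0 < s) {γ x : Rd d} (h : dist x γ ≤ s⁻¹) : cut s γ x = 1 := by
  refine chi_one ?_
  rw [norm_smul, Real.norm_of_nonneg hs.le, ← dist_eq_norm]
  calc s * dist x γ ≤ s * s⁻¹ := by gcongr
    _ = 1 := mul_inv_cancel₀ hs.ne'

lemma cut_zero {s : ℝ} (hs : 0 < s) {γ x : Rd d} (h : 2 * s⁻¹ ≤ dist x γ) : cut s γ x = 0 := by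
  refine chi_zero ?_
  rw [norm_smul, Real.norm_of_nonneg hs.le, ← dist_eq_norm]
  calc 2 = s * (2 * s⁻¹) := by field_simp
    _ ≤ _ := by gcongr

lemma cut_tsupport {s : ℝ} (hs : 0 < s) (γ : Rd d) : tsupport (cut s γ) ⊆ closedBall γ (2 * s⁻¹) := by
  refine closure_minimal (fun x hx => ?_) isClosed_closedBall
  by_contra h
  rw [mem_closedBall, not_le] at h
  exact hx (cut_zero hs h.le)

lemma cut_compact {s : ℝ} (hs : 0 < s) (γ : Rd d) : HasCompactSupport (cut s γ) :=
  HasCompactSupport.of_support_subset_isCompact (isCompact_closedBall γ (2 * s⁻¹))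
    ((subset_tsupport _).trans (cut_tsupport hs γ))

/-- smooth multiple of compactly supported -/
def mulC (u v : Rd d → ℂ) (hu : ContDiff ℝ (⊤ : ℕ∞) u) (hv : ContDiff ℝ (⊤ : ℕ∞) v)
    (hc : HasCompactSupport v) : SS d :=
  HasCompactSupport.toSchwartzMap (f := fun x => u x * v x) (hc.mul_left) (hu.mul hv)

lemma mulC_apply (u v : Rd d → ℂ) (hu hv hc) (x : Rd d) : mulC u v hu hv hc x = u x * v x := rfl

lemma mul_tsupport_right (u v : Rd d → ℂ) : tsupport (fun x => u x * v x) ⊆ tsupport v :=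
  closure_mono fun x hx => by
    intro h
    exact hx (by simp [h])

lemma mul_tsupport_left (u v : Rd d → ℂ) : tsupport (fun x => u x * v x) ⊆ tsupport u :=
  closure_mono fun x hx => by
    intro h
    exact hx (by simp [h])

lemma ss_contDiff (φ : SS d) : ContDiff ℝ (⊤ : ℕ∞) φ := φ.smooth (⊤ : ℕ∞)

/-- density of compactly supported functions -/
lemma ss_dense (φ : SS d) : ∃ φs : ℕ → SS d, (∀ n, HasCompactSupport (φs n)) ∧
    Tendsto φs atTop (𝓝 φ) := by
  have hpos : ∀ n : ℕ, (0:ℝ) < ((n:ℝ) + 1)⁻¹ := fun n => by positivity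
  let φs : ℕ → SS d := fun n => mulC φ (cut ((n:ℝ) + 1)⁻¹ 0) (ss_contDiff φ) (cut_contDiff _ _) (cut_compact (hpos n) _)
  refine ⟨φs, fun n => (cut_compact (hpos n) _).mul_left, ?_⟩
  rw [(schwartz_withSeminorms ℂ (Rd d) ℂ).tendsto_nhds]
  rintro ⟨k, m⟩ ε hε
  simp only [schwartzSeminormFamily_apply]
  choose C hC0 hC using fun i => cut_bound (d := d) i
  -- uniform constant
  let Q : ℝ := ∑ i ∈ Finset.range (m + 1), (m.choose i : ℝ) * SchwartzMap.seminorm ℂ (k+1) i φ * (C (m - i) + 1)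
  have hQ : 0 ≤ Q := Finset.sum_nonneg fun i _ => by
    have := apply_nonneg (SchwartzMap.seminorm ℂ (k+1) i) φ
    have := hC0 (m - i)
    positivity
  have main : ∀ n : ℕ, SchwartzMap.seminorm ℂ k m (φs n - φ) ≤ Q * ((n:ℝ) + 1)⁻¹ := by
    intro n
    refine SchwartzMap.seminorm_le_bound ℂ k m _ (by positivity) fun x => ?_
    have hfun : ⇑(φs n - φ) = fun x => φ x * (cut ((n:ℝ)+1)⁻¹ 0 x - 1) := by
      ext x
      simp only [SchwartzMap.sub_apply, φs, mulC_apply]; ring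
    rw [hfun]
    by_cases hx : ‖x‖ < n + 1
    · have h0 : (fun x => φ x * (cut ((n:ℝ)+1)⁻¹ 0 x - 1)) =ᶠ[𝓝 x] fun _ => (0:ℂ) := by
        have : {y : Rd d | ‖y‖ < n + 1} ∈ 𝓝 x := (isOpen_lt continuous_norm continuous_const).mem_nhds hx
        filter_upwards [this] with y hy
        rw [cut_one (hpos n) (by rw [dist_zero_right, inv_inv]; exact le_of_lt hy)]
        simp
      rw [(h0.iteratedFDeriv ℝ m).eq_of_nhds]
      have : iteratedFDeriv ℝ m (fun _ : Rd d => (0:ℂ)) = 0 := iteratedFDeriv_zero_fun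
      rw [this]
      simp only [Pi.zero_apply, norm_zero, mul_zero]
      positivity
    · push Not at hx
      have hle := norm_iteratedFDeriv_mul_le (𝕜 := ℝ) (N := (⊤ : ℕ∞)) (ss_contDiff φ)
        ((cut_contDiff ((n:ℝ)+1)⁻¹ (0 : Rd d)).sub contDiff_const (g := fun _ => (1:ℂ))) x (n := m) (by exact_mod_cast le_top)
      refine (mul_le_mul_of_nonneg_left hle (by positivity)).trans ?_
      rw [Finset.mul_sum, Finset.sum_mul]
      refine Finset.sum_le_sum fun i hi => ?_
      have h1 : ‖iteratedFDeriv ℝ (m - i) (fun x => cut ((n:ℝ)+1)⁻¹ 0 x - 1) x‖ ≤ C (m - i) + 1 := by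
        have hs1 : ((n:ℝ)+1)⁻¹ ≤ 1 := inv_le_one_of_one_le₀ (by linarith [Nat.cast_nonneg (α := ℝ) n])
        have e : iteratedFDeriv ℝ (m - i) (fun x : Rd d => cut ((n:ℝ)+1)⁻¹ 0 x - 1) x =
            iteratedFDeriv ℝ (m - i) (cut ((n:ℝ)+1)⁻¹ (0 : Rd d)) x - iteratedFDeriv ℝ (m - i) (fun _ : Rd d => (1:ℂ)) x := by
          have := iteratedFDeriv_sub_apply (𝕜 := ℝ) (x := x) (i := m - i) (f := cut ((n:ℝ)+1)⁻¹ (0 : Rd d)) (g := fun _ : Rd d => (1:ℂ))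
            ((cut_contDiff _ _).contDiffAt.of_le (nat_le_topw _)) contDiffAt_const
          exact this
        rw [e]
        refine (norm_sub_le _ _).trans (add_le_add ?_ ?_)
        · refine (hC (m - i) _ (hpos n).le _ _).trans ?_
          exact mul_le_of_le_one_right (hC0 _) (pow_le_one₀ (hpos n).le hs1)
        · rcases Nat.eq_zero_or_pos (m - i) with h | h
          · rw [h, norm_iteratedFDeriv_zero]; simp
          · rw [iteratedFDeriv_const_of_ne h.ne']; simp
      have h2 := SchwartzMap.le_seminorm ℂ (k+1) i φ x
      have h3 : ‖x‖ ^ k * ‖iteratedFDeriv ℝ i φ x‖ ≤ SchwartzMap.seminorm ℂ (k+1) i φ * ((n:ℝ)+1)⁻¹ := by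
        rw [← div_eq_mul_inv, le_div_iff₀ (by positivity)]
        refine le_trans ?_ h2
        rw [pow_succ]
        have : 0 ≤ ‖x‖ ^ k * ‖iteratedFDeriv ℝ i φ x‖ := by positivity
        nlinarith
      calc ‖x‖ ^ k * ((m.choose i : ℝ) * ‖iteratedFDeriv ℝ i φ x‖ * ‖iteratedFDeriv ℝ (m - i) (fun x => cut ((n:ℝ)+1)⁻¹ 0 x - 1) x‖)
          = (m.choose i : ℝ) * (‖x‖ ^ k * ‖iteratedFDeriv ℝ i φ x‖) * ‖iteratedFDeriv ℝ (m - i) (fun x => cut ((n:ℝ)+1)⁻¹ 0 x - 1) x‖ := by ring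
        _ ≤ (m.choose i : ℝ) * (SchwartzMap.seminorm ℂ (k+1) i φ * ((n:ℝ)+1)⁻¹) * (C (m - i) + 1) := by
          gcongr
        _ = _ := by ring
  have ht : Tendsto (fun n : ℕ => Q * ((n:ℝ) + 1)⁻¹) atTop (𝓝 0) := by
    have := (tendsto_one_div_add_atTop_nhds_zero_nat (𝕜 := ℝ)).const_mul Q
    simpa using this
  filter_upwards [ht.eventually (gt_mem_nhds hε)] with n hn
  exact (main n).trans_lt hn

lemma localize (P : SS d → Prop) (h0 : P 0) (hadd : ∀ a b, P a → P b → P (a + b)) (ψ : SS d)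
    (hψ : HasCompactSupport ψ)
    (hloc : ∀ x ∈ tsupport ψ, ∃ r > 0, ∀ ψ' : SS d, HasCompactSupport ψ' →
      tsupport ψ' ⊆ tsupport ψ → tsupport ψ' ⊆ closedBall x r → P ψ') : P ψ := by
  classical
  choose! r hr hP using hloc
  obtain ⟨t, ht, hcov⟩ := hψ.elim_nhds_subcover (fun x => ball x (r x / 2))
    (fun x hx => ball_mem_nhds x (by have := hr x hx; linarith))
  suffices H : ∀ t : Finset (Rd d), (∀ x ∈ t, x ∈ tsupport ψ) → ∀ ψ' : SS d, HasCompactSupport ψ' →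
      tsupport ψ' ⊆ tsupport ψ → tsupport ψ' ⊆ ⋃ x ∈ t, ball x (r x / 2) → P ψ' from
    H t ht ψ hψ subset_rfl hcov
  intro t
  induction t using Finset.induction_on with
  | empty =>
    intro _ ψ' _ _ h
    have : ψ' = 0 := by
      ext x
      have : x ∉ tsupport ψ' := fun hx => by simpa using h hx
      exact image_eq_zero_of_notMem_tsupport this
    rw [this]; exact h0
  | insert x t hx ih =>
    intro htm ψ' hc hs hcov
    have hrx := hr x (htm x (Finset.mem_insert_self _ _))
    have hpos : 0 < 2 / r x := by positivity
    let b := cut (2 / r x) x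
    let ψ1 : SS d := mulC b ψ' (cut_contDiff _ _) (ss_contDiff _) hc
    let ψ2 : SS d := mulC (fun y => 1 - b y) ψ' (contDiff_const.sub (cut_contDiff _ _)) (ss_contDiff _) hc
    have e : ψ' = ψ1 + ψ2 := by
      ext y
      simp only [SchwartzMap.add_apply, ψ1, ψ2, mulC_apply]; ring
    rw [e]
    refine hadd _ _ ?_ ?_
    · refine hP x (htm x (Finset.mem_insert_self _ _)) ψ1 hc.mul_left ((mul_tsupport_right _ _).trans hs) ?_
      refine (mul_tsupport_left _ _).trans ((cut_tsupport hpos x).trans ?_)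
      rw [inv_div]
      refine closedBall_subset_closedBall (by linarith)
    · refine ih (fun y hy => htm y (Finset.mem_insert_of_mem hy)) ψ2 hc.mul_left ((mul_tsupport_right _ _).trans hs) ?_
      intro y hy
      have hy1 := hcov (mul_tsupport_right _ _ hy)
      have hy2 : y ∉ ball x (r x / 2) := by
        intro hyb
        refine notMem_tsupport_iff_eventuallyEq.2 ?_ hy
        filter_upwards [isOpen_ball.mem_nhds hyb] with z hz
        change (1 - b z) * ψ' z = 0
        rw [show b z = 1 from cut_one hpos (by rw [inv_div]; exact le_of_lt hz)]
        simp
      simp only [Finset.mem_insert, iUnion_iUnion_eq_or_left, mem_union] at hy1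
      exact hy1.resolve_left hy2

/-- vanishing off the support -/
lemma td_vanish (T : TemperedDist d) (φ : SS d) (hc : HasCompactSupport φ)
    (h : ∀ x ∈ tsupport φ, x ∉ tdSupport T) : T φ = 0 := by
  refine localize (fun φ => T φ = 0) (map_zero _) (fun a b ha hb => by rw [map_add, ha, hb, add_zero]) φ hc
    fun x hx => ?_
  have := h x hx
  simp only [tdSupport, mem_setOf_eq, not_forall, not_exists, not_and, not_not] at this
  obtain ⟨U, hU, hxU, hT⟩ := this
  obtain ⟨r, hr, hrU⟩ := Metric.nhds_basis_closedBall.mem_iff.1 (hU.mem_nhds hxU)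
  exact ⟨r, hr, fun ψ' hc' _ hs => hT ψ' hc' (hs.trans hrU)⟩

end Cut

section Rep
variable {d K : ℕ}

structure Hyp (f : TemperedDist d) (Λ0 : Set (Rd d)) (η C : ℝ) (P : Rd d → VV d K) : Prop where
  hη : 0 < η
  ud : ∀ x ∈ Λ0, ∀ y ∈ Λ0, x ≠ y → η ≤ dist x y
  bd : BdOn Λ0 C P
  rep : ∀ φ : SS d, HasCompactSupport φ → f φ = ∑' x, rho 0 φ x (P x)

variable {f : TemperedDist d} {Λ0 : Set (Rd d)} {η C : ℝ} {P : Rd d → VV d K}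

lemma Hyp.C_nonneg (H : Hyp f Λ0 η C P) : 0 ≤ C := (norm_nonneg _).trans (H.bd.bd 0)

lemma rho_sub_fun (a : Fin d → ℂ) (g g' : SS d) (s : Rd d) (p : VV d K) :
    rho a (g - g') s p = rho a g s p - rho a g' s p := by
  rw [rho_apply, rho_apply, rho_apply, ← Finset.sum_sub_distrib]
  refine Finset.sum_congr rfl fun k _ => ?_
  rw [map_sub, SchwartzMap.sub_apply, mul_sub, mul_sub]

lemma qq_zero (a : Fin d → ℂ) : qq K a (0 : SS d) = 0 := by
  simp [qq, qd]

lemma Hyp.term_bound (H : Hyp f Λ0 η C P) (a : Fin d → ℂ) (φ : SS d) (t x : Rd d) :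
    ‖rho a φ (x - t) (P x)‖ ≤ C * qq K a φ * Λ0.indicator (fun x => wt (x - t)) x := by
  by_cases hx : x ∈ Λ0
  · rw [indicator_of_mem hx]
    refine (rho_bound _ _ _ _).trans ?_
    have := H.bd.bd x
    have := qq_nonneg (K := K) a φ
    have := (wt_pos (x - t)).le
    gcongr
  · have : P x = 0 := by
      by_contra h; exact hx (H.bd.supp x h)
    rw [this, map_zero, norm_zero, indicator_of_notMem hx, mul_zero]

lemma Hyp.summable (H : Hyp f Λ0 η C P) (a : Fin d → ℂ) (φ : SS d) (t : Rd d) :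
    Summable fun x => rho a φ (x - t) (P x) := by
  obtain ⟨M, hM, h⟩ := ud_sum H.hη H.ud
  exact Summable.of_norm_bounded ((h t).1.mul_left (C * qq K a φ)) fun x => H.term_bound a φ t x

lemma Hyp.sum_bound (H : Hyp f Λ0 η C P) : ∃ B, 0 ≤ B ∧ ∀ (a : Fin d → ℂ) (φ : SS d) (t : Rd d),
    ‖∑' x, rho a φ (x - t) (P x)‖ ≤ B * qq K a φ := by
  obtain ⟨M, hM, h⟩ := ud_sum H.hη H.ud
  refine ⟨C * M, mul_nonneg H.C_nonneg hM, fun a φ t => ?_⟩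
  have h1 := tsum_of_norm_bounded (((h t).1.mul_left (C * qq K a φ)).hasSum) fun x => H.term_bound a φ t x
  refine h1.trans ?_
  rw [tsum_mul_left]
  calc _ ≤ C * qq K a φ * M := by
        have := (h t).2
        have := H.C_nonneg
        have := qq_nonneg (K := K) a φ
        gcongr
    _ = _ := by ring

lemma Hyp.rep_all (H : Hyp f Λ0 η C P) (φ : SS d) : f φ = ∑' x, rho 0 φ x (P x) := by
  obtain ⟨φs, hc, hlim⟩ := ss_dense φ
  obtain ⟨B, hB, hb⟩ := H.sum_bound
  have h1 : Tendsto (fun n => f (φs n)) atTop (𝓝 (f φ)) := (f.continuous.tendsto φ).comp hlim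
  have h2 : Tendsto (fun n => f (φs n)) atTop (𝓝 (∑' x, rho 0 φ x (P x))) := by
    rw [tendsto_iff_norm_sub_tendsto_zero]
    have h3 : Tendsto (fun n => B * qq K 0 (φs n - φ)) atTop (𝓝 0) := by
      have := ((continuous_qq (K := K) (0 : Fin d → ℂ)).tendsto 0).comp (tendsto_sub_nhds_zero_iff.2 hlim)
      rw [qq_zero] at this
      simpa using this.const_mul B
    refine squeeze_zero (fun n => norm_nonneg _) (fun n => ?_) h3
    rw [H.rep _ (hc n)]
    have s1 := H.summable 0 (φs n) 0
    have s2 := H.summable 0 φ 0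
    have := hb 0 (φs n - φ) 0
    simp only [sub_zero] at s1 s2 this
    rw [← s1.tsum_sub s2]
    simpa only [rho_sub_fun] using this
  exact tendsto_nhds_unique h1 h2

lemma Hyp.rep_tr (H : Hyp f Λ0 η C P) (φ : SS d) (t : Rd d) :
    f (tr t φ) = ∑' x, rho 0 φ (x - t) (P x) := by
  rw [H.rep_all]
  simp only [rho_tr]

lemma Hyp.tr_bound (H : Hyp f Λ0 η C P) : ∃ B, 0 ≤ B ∧ ∀ (φ : SS d) (t : Rd d),
    ‖f (tr t φ)‖ ≤ B * qq K 0 φ := by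
  obtain ⟨B, hB, hb⟩ := H.sum_bound
  exact ⟨B, hB, fun φ t => by rw [H.rep_tr]; exact hb 0 φ t⟩

end Rep

section LemZ
variable {d : ℕ}

lemma td_finite_order (T : TemperedDist d) : ∃ N : ℕ, ∀ R : ℝ, ∃ D, 0 ≤ D ∧ ∀ (ψ : SS d) (ε : ℝ), 0 ≤ ε →
    (∀ x, ∀ n ≤ N, ‖iteratedFDeriv ℝ n ψ x‖ ≤ ε) → tsupport ψ ⊆ closedBall 0 R → ‖T ψ‖ ≤ D * ε := by
  classical
  let q : Seminorm ℂ (SS d) := (normSeminorm ℂ ℂ).comp T.toLinearMap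
  have hq : Continuous q := continuous_norm.comp T.continuous
  obtain ⟨s, C, hC, hle⟩ := Seminorm.bound_of_continuous (schwartz_withSeminorms ℂ (Rd d) ℂ) q hq
  refine ⟨s.sup Prod.snd, fun R => ⟨C * (max R 1) ^ (s.sup Prod.fst), by positivity, fun ψ ε hε h hs => ?_⟩⟩
  have h1 : ‖T ψ‖ ≤ C * (s.sup (schwartzSeminormFamily ℂ (Rd d) ℂ)) ψ := hle ψ
  refine h1.trans ?_
  rw [mul_assoc]
  refine mul_le_mul_of_nonneg_left ?_ C.2
  refine Seminorm.finset_sup_apply_le (by positivity) fun i hi => ?_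
  obtain ⟨k, n⟩ := i
  refine SchwartzMap.seminorm_le_bound ℂ k n ψ (by positivity) fun x => ?_
  by_cases hx : iteratedFDeriv ℝ n ψ x = 0
  · rw [hx, norm_zero, mul_zero]; positivity
  · have hxs : x ∈ closedBall 0 R := hs (support_iteratedFDeriv_subset n hx)
    rw [mem_closedBall_zero_iff] at hxs
    refine mul_le_mul ?_ (h x n (Finset.le_sup (f := Prod.snd) hi)) (norm_nonneg _) (by positivity)
    calc ‖x‖ ^ k ≤ (max R 1) ^ k := pow_le_pow_left₀ (norm_nonneg _) (hxs.trans (le_max_left _ _)) _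
      _ ≤ _ := pow_le_pow_right₀ (le_max_right _ _) (Finset.le_sup (f := Prod.fst) hi)

def Cls (γ : Rd d) (a : ℕ) (F : ℝ → Rd d → ℂ) : Prop :=
  (∀ r, ContDiff ℝ (⊤ : ℕ∞) (F r)) ∧ ∀ n : ℕ, ∃ C, 0 ≤ C ∧ ∀ r, 0 < r → r ≤ 1 → ∀ x ∈ closedBall γ (2 * r),
    ‖iteratedFDeriv ℝ n (F r) x‖ * r ^ n ≤ C * r ^ a

lemma Cls.mul {γ : Rd d} {a b : ℕ} {F G : ℝ → Rd d → ℂ} (hF : Cls γ a F) (hG : Cls γ b G) :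
    Cls γ (a + b) (fun r x => F r x * G r x) := by
  refine ⟨fun r => (hF.1 r).mul (hG.1 r), fun n => ?_⟩
  choose A hA0 hA using hF.2
  choose B hB0 hB using hG.2
  refine ⟨∑ i ∈ Finset.range (n + 1), (n.choose i : ℝ) * A i * B (n - i), Finset.sum_nonneg fun i _ => ?_, ?_⟩
  · have := hA0 i; have := hB0 (n - i); positivity
  intro r hr hr1 x hx
  have hle := norm_iteratedFDeriv_mul_le (𝕜 := ℝ) (N := (⊤ : ℕ∞)) (hF.1 r) (hG.1 r) x (n := n) (nat_le_topw _)
  refine (mul_le_mul_of_nonneg_right hle (by positivity)).trans ?_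
  rw [Finset.sum_mul, Finset.sum_mul]
  refine Finset.sum_le_sum fun i hi => ?_
  have hi' : i ≤ n := Nat.lt_succ_iff.1 (Finset.mem_range.1 hi)
  have e : r ^ n = r ^ i * r ^ (n - i) := by rw [← pow_add, Nat.add_sub_cancel' hi']
  have h1 := hA i r hr hr1 x hx
  have h2 := hB (n - i) r hr hr1 x hx
  have hA0' := hA0 i
  calc (n.choose i : ℝ) * ‖iteratedFDeriv ℝ i (F r) x‖ * ‖iteratedFDeriv ℝ (n - i) (G r) x‖ * r ^ n
      = (n.choose i : ℝ) * ((‖iteratedFDeriv ℝ i (F r) x‖ * r ^ i) * (‖iteratedFDeriv ℝ (n - i) (G r) x‖ * r ^ (n - i))) := by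
        rw [e]; ring
    _ ≤ (n.choose i : ℝ) * ((A i * r ^ a) * (B (n - i) * r ^ b)) := by gcongr
    _ = _ := by rw [pow_add]; ring

lemma smooth_bdd (γ : Rd d) (u : Rd d → ℂ) (hu : ContDiff ℝ (⊤ : ℕ∞) u) (n : ℕ) :
    ∃ C, 0 ≤ C ∧ ∀ x ∈ closedBall γ 2, ‖iteratedFDeriv ℝ n u x‖ ≤ C := by
  have hc : Continuous (iteratedFDeriv ℝ n u) := hu.continuous_iteratedFDeriv (nat_le_topw _)
  obtain ⟨C, hC⟩ := (isCompact_closedBall γ 2).exists_bound_of_continuousOn hc.continuousOn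
  exact ⟨C, (norm_nonneg _).trans (hC γ (mem_closedBall_self (by norm_num))), hC⟩

lemma Cls.const {γ : Rd d} {u : Rd d → ℂ} (hu : ContDiff ℝ (⊤ : ℕ∞) u) : Cls γ 0 (fun _ => u) := by
  refine ⟨fun _ => hu, fun n => ?_⟩
  obtain ⟨C, hC0, hC⟩ := smooth_bdd γ u hu n
  refine ⟨C, hC0, fun r hr hr1 x hx => ?_⟩
  rw [pow_zero]
  refine mul_le_mul (hC x (closedBall_subset_closedBall (by linarith) hx)) (pow_le_one₀ hr.le hr1) (by positivity) hC0

lemma Cls.van {γ : Rd d} {u : Rd d → ℂ} (hu : ContDiff ℝ (⊤ : ℕ∞) u) (h0 : u γ = 0) : Cls γ 1 (fun _ => u) := by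
  refine ⟨fun _ => hu, fun n => ?_⟩
  rcases Nat.eq_zero_or_pos n with rfl | hn
  · obtain ⟨C, hC0, hC⟩ := smooth_bdd γ u hu 1
    refine ⟨C * 2, by positivity, fun r hr hr1 x hx => ?_⟩
    rw [norm_iteratedFDeriv_zero, pow_zero, mul_one, pow_one]
    have := (convex_closedBall γ (2:ℝ)).norm_image_sub_le_of_norm_fderiv_le (𝕜 := ℝ) (f := u) (C := C)
      (x := γ) (y := x) (fun y _ => (hu.differentiable (by simp)) y)
      (fun y hy => by rw [← norm_iteratedFDeriv_one]; exact hC y hy)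
      (mem_closedBall_self (by norm_num)) (closedBall_subset_closedBall (by linarith) hx)
    rw [h0, sub_zero, ← dist_eq_norm] at this
    rw [mem_closedBall] at hx
    nlinarith
  · obtain ⟨C, hC0, hC⟩ := smooth_bdd γ u hu n
    refine ⟨C, hC0, fun r hr hr1 x hx => ?_⟩
    refine mul_le_mul (hC x (closedBall_subset_closedBall (by linarith) hx)) (pow_le_pow_of_le_one hr.le hr1 hn) (by positivity) hC0

lemma Cls.pow {γ : Rd d} {u : Rd d → ℂ} (h : Cls γ 1 (fun _ => u)) (m : ℕ) : Cls γ m (fun _ x => u x ^ m) := by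
  induction m with
  | zero => simpa using Cls.const (γ := γ) (u := fun _ => (1:ℂ)) contDiff_const
  | succ m ih => simpa only [pow_succ] using ih.mul h

lemma Cls.cut {γ : Rd d} : Cls γ 0 (fun r => cut r⁻¹ γ) := by
  refine ⟨fun r => cut_contDiff _ _, fun n => ?_⟩
  obtain ⟨C, hC0, hC⟩ := cut_bound (d := d) n
  refine ⟨C, hC0, fun r hr hr1 x hx => ?_⟩
  have := hC r⁻¹ (by positivity) γ x
  rw [inv_pow, ← div_eq_mul_inv, le_div_iff₀ (by positivity)] at this
  simpa using this

/-- Lemma Z -/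
lemma td_lemZ (T : TemperedDist d) : ∃ M : ℕ, ∀ (γ : Rd d) (w u : Rd d → ℂ) (hw : ContDiff ℝ (⊤ : ℕ∞) w)
    (hu : ContDiff ℝ (⊤ : ℕ∞) u) (hwc : HasCompactSupport w), u γ = 0 →
    (∀ x ∈ tsupport w, x ∈ tdSupport T → x = γ) → T (mulC (fun x => u x ^ M) w (hu.pow M) hw hwc) = 0 := by
  obtain ⟨N, hN⟩ := td_finite_order T
  refine ⟨N + 1, fun γ w u hw hu hwc h0 hsupp => ?_⟩
  obtain ⟨D, hD0, hD⟩ := hN (‖γ‖ + 2)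
  set ψ := mulC (fun x => u x ^ (N+1)) w (hu.pow (N+1)) hw hwc with hψ
  have hψc : HasCompactSupport ψ := hwc.mul_left
  have hψs : tsupport ψ ⊆ tsupport w := mul_tsupport_right _ _
  have hcls : Cls γ (N + 1) (fun r x => cut r⁻¹ γ x * ψ x) := by
    have := (Cls.cut (γ := γ)).mul (((Cls.van hu h0).pow (N+1)).mul (Cls.const hw))
    simp only [zero_add, add_zero] at this
    exact this
  choose A hA0 hA using hcls.2
  set B := ∑ n ∈ Finset.range (N + 1), A n with hB
  have hB0 : 0 ≤ B := Finset.sum_nonneg fun n _ => hA0 n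
  have main : ∀ r : ℝ, 0 < r → r ≤ 1 → ‖T ψ‖ ≤ D * (B * r) := by
    intro r hr hr1
    have hri : 0 < r⁻¹ := by positivity
    let ψ1 : SS d := mulC (cut r⁻¹ γ) ψ (cut_contDiff _ _) (ss_contDiff _) hψc
    let ψ2 : SS d := mulC (fun x => 1 - cut r⁻¹ γ x) ψ (contDiff_const.sub (cut_contDiff _ _)) (ss_contDiff _) hψc
    have e : ψ = ψ1 + ψ2 := by
      ext y; simp only [SchwartzMap.add_apply, ψ1, ψ2, mulC_apply]; ring
    have h2 : T ψ2 = 0 := by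
      refine td_vanish T ψ2 hψc.mul_left fun x hx hxT => ?_
      have hxγ := hsupp x (hψs (mul_tsupport_right _ _ hx)) hxT
      subst hxγ
      refine notMem_tsupport_iff_eventuallyEq.2 ?_ hx
      filter_upwards [ball_mem_nhds x hr] with z hz
      change (1 - cut r⁻¹ x z) * ψ z = 0
      rw [cut_one hri (by rw [inv_inv]; exact le_of_lt hz)]
      simp
    rw [e, map_add, h2, add_zero]
    have hs1 : tsupport ψ1 ⊆ closedBall γ (2 * r) := by
      have := (mul_tsupport_left (cut r⁻¹ γ) ψ).trans (cut_tsupport hri γ)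
      rwa [inv_inv] at this
    refine hD ψ1 (B * r) (by positivity) (fun x n hn => ?_) (hs1.trans ?_)
    · by_cases hx : iteratedFDeriv ℝ n ψ1 x = 0
      · rw [hx, norm_zero]; positivity
      · have hxs := hs1 (support_iteratedFDeriv_subset n hx)
        have h3 := hA n r hr hr1 x hxs
        have h4 : A n ≤ B := Finset.single_le_sum (f := A) (fun i _ => hA0 i) (Finset.mem_range.2 (by omega))
        have h5 : r ^ (N + 1) ≤ r * r ^ n := by
          rw [← pow_succ']; exact pow_le_pow_of_le_one hr.le hr1 (by omega)
        have h6 : ‖iteratedFDeriv ℝ n ψ1 x‖ * r ^ n ≤ (B * r) * r ^ n := by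
          refine h3.trans ?_
          rw [mul_assoc]
          exact mul_le_mul h4 h5 (by positivity) hB0
        exact le_of_mul_le_mul_right h6 (by positivity)
    · intro x hx
      rw [mem_closedBall] at hx
      rw [mem_closedBall_zero_iff]
      have := norm_le_norm_add_norm_sub' x γ
      rw [← dist_eq_norm] at this
      linarith
  have hlim : Tendsto (fun r : ℝ => D * (B * r)) (𝓝[>] 0) (𝓝 0) := by
    have : Tendsto (fun r : ℝ => D * (B * r)) (𝓝 0) (𝓝 (D * (B * 0))) := by
      apply Continuous.tendsto; fun_prop
    simp only [mul_zero] at this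
    exact this.mono_left nhdsWithin_le_nhds
  have : ‖T ψ‖ ≤ 0 := by
    refine ge_of_tendsto hlim ?_
    filter_upwards [Ioc_mem_nhdsGT (zero_lt_one' ℝ)] with r hr
    exact main r hr.1 hr.2
  simpa using this

end LemZ

section LemA
variable {d K : ℕ}

lemma seq_poly (b : ℕ → ℕ → ℂ) (hrec : ∀ m n, b (m+1) n = b m (n+1) - b m n)
    (hbd : ∃ B, ∀ n, ‖b 0 n‖ ≤ B) {M : ℕ} (hM : ∀ n, b M n = 0) : ∀ n, b 1 n = 0 := by
  have hb : ∀ m, ∃ B, ∀ n, ‖b m n‖ ≤ B := by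
    intro m
    induction m with
    | zero => exact hbd
    | succ m ih =>
      obtain ⟨B, hB⟩ := ih
      exact ⟨B + B, fun n => by rw [hrec]; exact (norm_sub_le _ _).trans (add_le_add (hB _) (hB _))⟩
  have step : ∀ m, (∀ n, b (m+2) n = 0) → ∀ n, b (m+1) n = 0 := by
    intro m h
    have hconst : ∀ n, b (m+1) n = b (m+1) 0 := by
      intro n
      induction n with
      | zero => rfl
      | succ n ih => rw [← ih]; have := hrec (m+1) n; rw [h] at this; exact (sub_eq_zero.1 this.symm)
    have hlin : ∀ n : ℕ, b m n = b m 0 + n * b (m+1) 0 := by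
      intro n
      induction n with
      | zero => simp
      | succ n ih =>
        have := hrec m n
        rw [hconst n] at this
        rw [eq_add_of_sub_eq this.symm, ih]; push_cast; ring
    obtain ⟨B, hB⟩ := hb m
    have h0 : b (m+1) 0 = 0 := by
      by_contra hne
      have hpos : 0 < ‖b (m+1) 0‖ := norm_pos_iff.2 hne
      obtain ⟨n, hn⟩ := exists_nat_gt ((2 * B) / ‖b (m+1) 0‖)
      rw [div_lt_iff₀ hpos] at hn
      have h1 : (n : ℂ) * b (m+1) 0 = b m n - b m 0 := by rw [hlin n]; ring
      have h2 : (n : ℝ) * ‖b (m+1) 0‖ ≤ B + B := by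
        have := congrArg norm h1
        rw [norm_mul, Complex.norm_natCast] at this
        rw [this]; exact (norm_sub_le _ _).trans (add_le_add (hB _) (hB _))
      linarith
    intro n; rw [hconst, h0]
  have : ∀ M, (∀ n, b (M + 1) n = 0) → ∀ n, b 1 n = 0 := by
    intro M
    induction M with
    | zero => intro h; exact h
    | succ M ih => intro h; exact ih (step M h)
  refine this M fun n => ?_
  rw [hrec, hM, hM, sub_zero]

lemma e2pi_contDiff (t : Rd d) : ContDiff ℝ (⊤ : ℕ∞) (fun x => e2pi x t) := by
  unfold e2pi
  refine ContDiff.cexp (contDiff_const.mul ?_)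
  exact Complex.ofRealCLM.contDiff.comp (contDiff_id.inner ℝ contDiff_const)

/-- modulation of a compactly supported function -/
def modC (t : Rd d) (ψ : SS d) (hc : HasCompactSupport ψ) : SS d :=
  mulC (fun x => e2pi x t) ψ (e2pi_contDiff t) (ss_contDiff ψ) hc

lemma modC_apply (t : Rd d) (ψ : SS d) (hc) (x : Rd d) : modC t ψ hc x = e2pi x t * ψ x := rfl

abbrev FT : SS d →L[ℂ] SS d := fourierTransformCLM ℂ

lemma FT_apply (ψ : SS d) (y : Rd d) : FT ψ y = ∫ s, e2pi s (-y) * ψ s := by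
  rw [fourierTransformCLM_apply, SchwartzMap.fourier_coe, Real.fourier_eq']
  refine integral_congr_ae (Eventually.of_forall fun s => ?_)
  simp only [smul_eq_mul, e2pi, inner_neg_right]
  congr 2
  push_cast; ring

lemma FT_modC (t : Rd d) (ψ : SS d) (hc) : FT (modC t ψ hc) = tr t (FT ψ) := by
  ext y
  rw [tr_apply, FT_apply, FT_apply]
  refine integral_congr_ae (Eventually.of_forall fun s => ?_)
  simp only [modC_apply]
  rw [show -(y - t) = -y + t by abel, e2pi_add_right]; ring

lemma FT_tr (ξ : Rd d) (ψ : SS d) (y : Rd d) : FT (tr ξ ψ) y = e2pi y (-ξ) * FT ψ y := by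
  rw [FT_apply, FT_apply, ← integral_add_right_eq_self _ ξ, ← integral_const_mul]
  refine integral_congr_ae (Eventually.of_forall fun s => ?_)
  simp only [tr_apply, add_sub_cancel_right]
  rw [e2pi_add_left, e2pi_neg_right ξ y, e2pi_neg_right y ξ, e2pi_comm ξ y]; ring

variable {f : TemperedDist d} {Λ0 : Set (Rd d)} {η C : ℝ} {P : Rd d → VV d K}

lemma Hyp.lemA (H : Hyp f Λ0 η C P) (t γ : Rd d) (ψ : SS d) (hc : HasCompactSupport ψ)
    (hs : ∀ x ∈ tsupport ψ, x ∈ tdSupport (fourierTD f) → x = γ) :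
    f (tr t (FT ψ)) = e2pi γ t * f (FT ψ) := by
  set T := fourierTD f with hT
  have hTF : ∀ φ, T φ = f (FT φ) := fun φ => rfl
  obtain ⟨M, hM⟩ := td_lemZ T
  let e : Rd d → ℂ := fun x => e2pi x t * e2pi (-γ) t
  have he : ContDiff ℝ (⊤ : ℕ∞) e := (e2pi_contDiff t).mul contDiff_const
  have heγ : e γ = 1 := by
    simp only [e]; rw [← e2pi_add_left, add_neg_cancel, e2pi_zero_left]
  let u : Rd d → ℂ := fun x => e x - 1
  have hu : ContDiff ℝ (⊤ : ℕ∞) u := he.sub contDiff_const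
  let w : ℕ → Rd d → ℂ := fun n x => e x ^ n * ψ x
  have hw : ∀ n, ContDiff ℝ (⊤ : ℕ∞) (w n) := fun n => (he.pow n).mul (ss_contDiff ψ)
  have hwc : ∀ n, HasCompactSupport (w n) := fun n => hc.mul_left
  let b : ℕ → ℕ → ℂ := fun m n => T (mulC (fun x => u x ^ m) (w n) (hu.pow m) (hw n) (hwc n))
  obtain ⟨B, hB0, hB⟩ := H.tr_bound
  have hen : ∀ n : ℕ, ∀ x, e x ^ n = e2pi x ((n:ℝ) • t) * e2pi (-γ) ((n:ℝ) • t) := by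
    intro n x
    induction n with
    | zero => simp [e2pi_zero_right]
    | succ n ih =>
      rw [pow_succ, ih]
      have : ((n + 1 : ℕ) : ℝ) • t = (n:ℝ) • t + t := by rw [Nat.cast_succ, add_smul, one_smul]
      rw [this, e2pi_add_right, e2pi_add_right]; simp only [e]; ring
  have key : ∀ n : ℕ, b 0 n = e2pi (-γ) ((n:ℝ) • t) * f (tr ((n:ℝ) • t) (FT ψ)) := by
    intro n
    have : mulC (fun x => u x ^ 0) (w n) (hu.pow 0) (hw n) (hwc n) = e2pi (-γ) ((n:ℝ) • t) • modC ((n:ℝ) • t) ψ hc := by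
      ext x
      rw [SchwartzMap.smul_apply, mulC_apply, modC_apply, pow_zero, one_mul, smul_eq_mul]
      simp only [w, hen]; ring
    simp only [b]
    rw [this, map_smul, hTF, FT_modC, smul_eq_mul]
  have h1 := seq_poly b ?_ ?_ (M := M) ?_
  · have h2 : b 0 1 = b 0 0 := by
      have := h1 0
      have h3 : b 1 0 = b 0 1 - b 0 0 := by
        simp only [b]; rw [← map_sub]; congr 1; ext x
        simp only [SchwartzMap.sub_apply, mulC_apply, w, u]; ring
      rw [h3] at this; exact sub_eq_zero.1 this
    rw [key, key] at h2
    simp only [Nat.cast_one, one_smul, Nat.cast_zero, zero_smul, e2pi_zero_right, one_mul] at h2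
    have htr0 : tr (0 : Rd d) (FT ψ) = FT ψ := by ext x; rw [tr_apply, sub_zero]
    rw [htr0] at h2
    rw [← h2, ← mul_assoc, ← e2pi_add_left, add_neg_cancel, e2pi_zero_left, one_mul]
  · intro m n
    simp only [b]; rw [← map_sub]; congr 1; ext x
    simp only [SchwartzMap.sub_apply, mulC_apply, w, u]; ring
  · refine ⟨B * qq K 0 (FT ψ), fun n => ?_⟩
    rw [key, norm_mul, norm_e2pi, one_mul]
    exact hB _ _
  · intro n
    refine hM γ (w n) u (hw n) hu (hwc n) (by simp [u, heγ]) fun x hx => hs x (mul_tsupport_right _ _ hx)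

end LemA

section Jets
variable {d K : ℕ}

lemma ud_one {Λ0 : Set (Rd d)} {η : ℝ} (hη : 0 < η)
    (hΛ : ∀ x ∈ Λ0, ∀ y ∈ Λ0, x ≠ y → η ≤ dist x y) (x : Rd d) :
    ∃ γ, ∀ y ∈ Λ0, dist y x ≤ η / 3 → y = γ := by
  by_cases h : ∃ y ∈ Λ0, dist y x ≤ η / 3
  · obtain ⟨γ, hγ, hγx⟩ := h
    refine ⟨γ, fun y hy hyx => ?_⟩
    by_contra hne
    have h1 := hΛ y hy γ hγ hne
    have h2 := dist_triangle_right y γ x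
    linarith
  · exact ⟨x, fun y hy hyx => absurd ⟨y, hy, hyx⟩ h⟩

lemma ud_iso {Λ0 : Set (Rd d)} {η : ℝ} (hη : 0 < η)
    (hΛ : ∀ x ∈ Λ0, ∀ y ∈ Λ0, x ≠ y → η ≤ dist x y) (z : Rd d) :
    ∃ r > 0, r ≤ η ∧ ∀ y ∈ Λ0, dist y z < r → y = z := by
  obtain ⟨γ, hγ⟩ := ud_one hη hΛ z
  by_cases h : γ = z
  · exact ⟨η / 3, by positivity, by linarith, fun y hy hd => h ▸ hγ y hy hd.le⟩
  · refine ⟨min (η/3) (dist γ z), lt_min (by positivity) (dist_pos.2 h), (min_le_left _ _).trans (by linarith), fun y hy hd => ?_⟩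
    have := hγ y hy (hd.le.trans (min_le_left _ _))
    rw [this] at hd
    exact absurd (hd.trans_le (min_le_right _ _)) (lt_irrefl _)

lemma pderiv_local {F : Rd d → ℂ} {x : Rd d} {c : ℂ} {a : Fin d → ℂ} (h : F =ᶠ[𝓝 x] fun y => c * expL a y) (i : Fin d) :
    pderiv' i F =ᶠ[𝓝 x] fun y => (a i * c) * expL a y := by
  have h1 := h.fderiv (𝕜 := ℝ)
  filter_upwards [h1] with y hy
  rw [pderiv', hy]
  have hd : DifferentiableAt ℝ (expL a) y := (expL_contDiff a).differentiable (by simp) y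
  have h3 := pderiv_expL a i y
  rw [pderiv'] at h3
  rw [fderiv_const_mul hd]
  simp only [ContinuousLinearMap.smul_apply, h3, smul_eq_mul]; ring

lemma Dmulti_local {F : Rd d → ℂ} {x : Rd d} {c : ℂ} {a : Fin d → ℂ} (h : F =ᶠ[𝓝 x] fun y => c * expL a y)
    (k : Fin d → ℕ) : Dmulti k F x = ((∏ i, a i ^ k i) * c) * expL a x := by
  have h1 : ∀ i n (F : Rd d → ℂ) (c : ℂ), F =ᶠ[𝓝 x] (fun y => c * expL a y) →
      (pderiv' i)^[n] F =ᶠ[𝓝 x] fun y => (a i ^ n * c) * expL a y := by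
    intro i n
    induction n with
    | zero => intro F c h; simpa using h
    | succ n ih =>
      intro F c h
      rw [Function.iterate_succ_apply]
      refine (ih _ _ (pderiv_local h i)).trans (Eventually.of_forall fun y => ?_)
      simp only [pow_succ]; ring
  have h2 : ∀ l : List (Fin d), ((l.map fun i => (pderiv' i)^[k i]).foldr (· ∘ ·) id) F =ᶠ[𝓝 x]
      fun y => ((l.map fun i => a i ^ k i).prod * c) * expL a y := by
    intro l
    induction l with
    | nil => simpa using h
    | cons i l ih =>
      simp only [List.map_cons, List.foldr_cons, List.prod_cons, Function.comp_apply]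
      refine (h1 i (k i) _ _ ih).trans (Eventually.of_forall fun y => ?_)
      simp only [mul_assoc]
  have h3 := (h2 (List.finRange d)).eq_of_nhds
  have h4 : ((List.finRange d).map fun i => a i ^ k i).prod = ∏ i, a i ^ k i := by
    rw [← List.ofFn_eq_map, List.prod_ofFn]
  rw [Dmulti, h3, h4]

lemma rho_zero_of_notMem {φ : SS d} {s : Rd d} (hs : s ∉ tsupport φ) : (rho 0 φ s : VV d K →L[ℂ] ℂ) = 0 := by
  ext p
  rw [rho_apply, ContinuousLinearMap.zero_apply]
  refine Finset.sum_eq_zero fun k _ => ?_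
  rw [← Dmulti_eq, Dmulti_local (c := 0) (a := 0)]
  · simp
  · refine (notMem_tsupport_iff_eventuallyEq.1 hs).trans (Eventually.of_forall fun y => ?_)
    simp

lemma jets {p : VV d K} (hp : p ≠ 0) {r : ℝ} (hr : 0 < r) : ∃ φ : SS d, HasCompactSupport φ ∧
    tsupport φ ⊆ ball 0 r ∧ rho 0 φ 0 p ≠ 0 := by
  by_contra hcon
  push Not at hcon
  have hs : 0 < 3 / r := by positivity
  have key : ∀ a : Fin d → ℂ, ∑ k : mIdx d K, p k * (-1 : ℂ) ^ (∑ i, k.1 i) * ∏ i, a i ^ k.1 i = 0 := by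
    intro a
    let φ : SS d := mulC (expL a) (cut (3 / r) 0) (expL_contDiff a) (cut_contDiff _ _) (cut_compact hs _)
    have h1 := hcon φ (cut_compact hs _).mul_left (((mul_tsupport_right _ _).trans (cut_tsupport hs 0)).trans ?_)
    · rw [rho_apply] at h1
      rw [← h1]
      refine Finset.sum_congr rfl fun k _ => ?_
      rw [← Dmulti_eq, Dmulti_local (c := 1) (a := a)]
      · simp [expL]; ring
      · filter_upwards [ball_mem_nhds (0 : Rd d) (inv_pos.2 hs)] with y hy
        change expL a y * cut (3/r) 0 y = _
        rw [cut_one hs (le_of_lt hy)]; ring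
    · rw [inv_div]
      exact closedBall_subset_ball (by linarith)
  let q : MvPolynomial (Fin d) ℂ := ∑ k : mIdx d K,
    MvPolynomial.monomial (Finsupp.equivFunOnFinite.symm k.1) (p k * (-1 : ℂ) ^ (∑ i, k.1 i))
  have hq : q = 0 := by
    refine MvPolynomial.funext fun a => ?_
    simp only [q, map_sum, MvPolynomial.eval_monomial, map_zero]
    rw [← key a]
    refine Finset.sum_congr rfl fun k _ => ?_
    rw [Finsupp.prod_fintype _ _ (by simp)]
    simp
  refine hp (funext fun k => ?_)
  have h1 := congrArg (MvPolynomial.coeff (Finsupp.equivFunOnFinite.symm k.1)) hq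
  simp only [q, MvPolynomial.coeff_sum, MvPolynomial.coeff_monomial, MvPolynomial.coeff_zero,
    EmbeddingLike.apply_eq_iff_eq] at h1
  rw [Finset.sum_eq_single k] at h1
  · simpa using h1
  · intro b _ hb
    rw [if_neg]; intro h; exact hb (Subtype.ext h)
  · simp

lemma fin_sep {V : Type*} [NormedAddCommGroup V] [NormedSpace ℂ V] [FiniteDimensional ℂ V] {ι : Type*}
    (A : ι → V →L[ℂ] ℂ) (hA : ∀ p, p ≠ 0 → ∃ i, A i p ≠ 0) :
    ∃ (s : Finset ι) (κ : ℝ), 0 < κ ∧ ∀ p, κ * ‖p‖ ≤ ∑ i ∈ s, ‖A i p‖ := by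
  classical
  haveI : ProperSpace V := FiniteDimensional.proper ℂ V
  have hS : IsCompact (sphere (0 : V) 1) := isCompact_sphere 0 1
  have hcov : sphere (0 : V) 1 ⊆ ⋃ i, {p | A i p ≠ 0} := fun p hp => by
    have : p ≠ 0 := by rintro rfl; simp at hp
    obtain ⟨i, hi⟩ := hA p this
    exact mem_iUnion.2 ⟨i, hi⟩
  obtain ⟨s, hs⟩ := hS.elim_finite_subcover _ (fun i => isOpen_ne_fun (A i).continuous continuous_const) hcov
  have hcont : Continuous fun p => ∑ i ∈ s, ‖A i p‖ := continuous_finset_sum _ fun i _ => (A i).continuous.norm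
  rcases (sphere (0 : V) 1).eq_empty_or_nonempty with he | hne
  · refine ⟨s, 1, one_pos, fun p => ?_⟩
    have : p = 0 := by
      by_contra h
      have : ((‖p‖ : ℂ)⁻¹ • p) ∈ sphere (0 : V) 1 := by
        rw [mem_sphere_zero_iff_norm, norm_smul, norm_inv, Complex.norm_real, norm_norm,
          inv_mul_cancel₀ (norm_ne_zero_iff.2 h)]
      rw [he] at this; exact this
    simp [this]
  · obtain ⟨p0, hp0, hmin⟩ := hS.exists_isMinOn hne hcont.continuousOn
    refine ⟨s, ∑ i ∈ s, ‖A i p0‖, ?_, fun p => ?_⟩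
    · obtain ⟨i, hi, hip⟩ := mem_iUnion₂.1 (hs hp0)
      exact Finset.sum_pos' (fun _ _ => norm_nonneg _) ⟨i, hi, norm_pos_iff.2 hip⟩
    · by_cases h : p = 0
      · simp [h]
      have hm : ((‖p‖ : ℂ)⁻¹ • p) ∈ sphere (0 : V) 1 := by
        rw [mem_sphere_zero_iff_norm, norm_smul, norm_inv, Complex.norm_real, norm_norm,
          inv_mul_cancel₀ (norm_ne_zero_iff.2 h)]
      have := hmin hm
      simp only [mem_setOf_eq, map_smul, norm_smul, norm_inv, Complex.norm_real, norm_norm] at this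
      rw [← Finset.mul_sum, inv_mul_eq_div, le_div_iff₀ (norm_pos_iff.2 h)] at this
      exact this

end Jets

section G23
variable {d K : ℕ} {f : TemperedDist d} {Λ0 : Set (Rd d)} {η C : ℝ} {P : Rd d → VV d K}

lemma Hyp.bohr_lim (H : Hyp f Λ0 η C P) (hΓ : UniformlyDiscrete (tdSupport (fourierTD f))) (φ : SS d) :
    Tendsto (fun h => f (tr h φ)) (bohr d) (𝓝 (f φ)) := by
  obtain ⟨ε, hε, hud⟩ := hΓ
  have step1 : ∀ ψ : SS d, HasCompactSupport ψ → Tendsto (fun h => f (tr h (FT ψ))) (bohr d) (𝓝 (f (FT ψ))) := by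
    intro ψ hc
    refine localize (fun ψ => Tendsto (fun h => f (tr h (FT ψ))) (bohr d) (𝓝 (f (FT ψ)))) ?_ ?_ ψ hc ?_
    · simp only [map_zero]; exact tendsto_const_nhds
    · intro a b ha hb
      simp only [map_add]; exact ha.add hb
    · intro x hx
      obtain ⟨γ, hγ⟩ := ud_one hε hud x
      refine ⟨ε / 3, by positivity, fun ψ' hc' _ hs => ?_⟩
      have h1 : ∀ h, f (tr h (FT ψ')) = e2pi γ h * f (FT ψ') := fun h =>
        H.lemA h γ ψ' hc' fun y hy hyT => hγ y hyT (hs hy)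
      simp only [h1]
      have := (tendsto_bohr γ).mul_const (f (FT ψ'))
      simpa only [e2pi_comm _ γ, one_mul] using this
  obtain ⟨B, hB0, hB⟩ := H.tr_bound
  let ψ : SS d := FourierTransformInv.fourierInv φ
  have hψ : FT ψ = φ := by
    rw [fourierTransformCLM_apply]; exact FourierTransform.fourier_fourierInv_eq φ
  obtain ⟨ψs, hc, hlim⟩ := ss_dense ψ
  have hlim2 : Tendsto (fun n => B * qq K 0 (φ - FT (ψs n))) atTop (𝓝 0) := by
    have h1 : Tendsto (fun n => φ - FT (ψs n)) atTop (𝓝 0) := by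
      have := ((FT (d := d)).continuous.tendsto ψ).comp hlim
      rw [hψ] at this
      simpa [Function.comp_def] using (tendsto_const_nhds (x := φ)).sub this
    have := ((continuous_qq (K := K) (0 : Fin d → ℂ)).tendsto 0).comp h1
    rw [qq_zero] at this
    simpa using this.const_mul B
  have htr0 : ∀ φ : SS d, tr (0 : Rd d) φ = φ := fun φ => by ext x; rw [tr_apply, sub_zero]
  rw [Metric.tendsto_nhds]
  intro δ hδ
  obtain ⟨n, hn⟩ := (hlim2.eventually (gt_mem_nhds (show 0 < δ / 3 by positivity))).exists
  filter_upwards [Metric.tendsto_nhds.1 (step1 (ψs n) (hc n)) (δ / 3) (by positivity)] with h hh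
  have h1 := hB (φ - FT (ψs n)) h
  have h2 := hB (φ - FT (ψs n)) 0
  rw [htr0, map_sub] at h2
  rw [map_sub, map_sub] at h1
  rw [dist_eq_norm] at hh ⊢
  have : f (tr h φ) - f φ = (f (tr h φ) - f (tr h (FT (ψs n)))) + (f (tr h (FT (ψs n))) - f (FT (ψs n)))
    - (f φ - f (FT (ψs n))) := by ring
  rw [this]
  have h3 := norm_sub_le ((f (tr h φ) - f (tr h (FT (ψs n)))) + (f (tr h (FT (ψs n))) - f (FT (ψs n)))) (f φ - f (FT (ψs n)))
  have h4 := norm_add_le (f (tr h φ) - f (tr h (FT (ψs n)))) (f (tr h (FT (ψs n))) - f (FT (ψs n)))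
  linarith

lemma Hyp.eval_at (H : Hyp f Λ0 η C P) {φ : SS d} {r : ℝ} (hs : tsupport φ ⊆ ball 0 r) {z : Rd d}
    (hz : ∀ y ∈ Λ0, dist y z < r → y = z) : f (tr z φ) = rho 0 φ 0 (P z) := by
  rw [H.rep_tr, tsum_eq_single z]
  · rw [sub_self]
  · intro x hx
    by_cases hP : P x = 0
    · rw [hP, map_zero]
    · rw [rho_zero_of_notMem, ContinuousLinearMap.zero_apply]
      intro hm
      have := hs hm
      rw [mem_ball_zero_iff, ← dist_eq_norm] at this
      exact hx (hz x (H.bd.supp x hP) this)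

lemma tr_tr (a b : Rd d) (φ : SS d) : tr a (tr b φ) = tr (b + a) φ := by
  ext x; rw [tr_apply, tr_apply, tr_apply]; congr 1; abel

lemma Hyp.G2 (H : Hyp f Λ0 η C P) (hΓ : UniformlyDiscrete (tdSupport (fourierTD f))) (z : Rd d) (ε : ℝ)
    (hε : 0 < ε) : ∀ᶠ h in bohr d, P (z + h) ≠ 0 → ‖P (z + h) - P z‖ < ε := by
  obtain ⟨r, hr, hrη, hiso⟩ := ud_iso H.hη H.ud z
  let ι := {φ : SS d // tsupport φ ⊆ ball 0 r}
  obtain ⟨s, κ, hκ, hsep⟩ := fin_sep (V := VV d K) (ι := ι) (fun φ => rho 0 φ.1 0) fun p hp => by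
    obtain ⟨φ, -, h1, h2⟩ := jets hp hr
    exact ⟨⟨φ, h1⟩, h2⟩
  have hlim : Tendsto (fun h => ∑ φ ∈ s, ‖f (tr h (tr z φ.1)) - f (tr z φ.1)‖) (bohr d) (𝓝 0) := by
    have : Tendsto (fun h => ∑ φ ∈ s, ‖f (tr h (tr z φ.1)) - f (tr z φ.1)‖) (bohr d) (𝓝 (∑ φ ∈ s, (0:ℝ))) :=
      tendsto_finset_sum _ fun φ _ => tendsto_iff_norm_sub_tendsto_zero.1 (H.bohr_lim hΓ (tr z φ.1))
    simpa using this
  filter_upwards [hlim.eventually (gt_mem_nhds (show 0 < κ * ε by positivity))] with h hh hP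
  have h1 := hsep (P (z + h) - P z)
  have h2 : ∀ φ ∈ s, ‖(rho 0 φ.1 0 : VV d K →L[ℂ] ℂ) (P (z + h) - P z)‖ = ‖f (tr h (tr z φ.1)) - f (tr z φ.1)‖ := by
    intro φ _
    rw [tr_tr, H.eval_at φ.2 hiso, H.eval_at φ.2 (z := z + h), map_sub]
    intro y hy hd
    by_contra hne
    have := H.ud y hy (z + h) (H.bd.supp _ hP) hne
    linarith
  rw [Finset.sum_congr rfl h2] at h1
  exact lt_of_mul_lt_mul_left (h1.trans_lt hh) hκ.le

lemma Hyp.G3 (H : Hyp f Λ0 η C P) (hΓ : UniformlyDiscrete (tdSupport (fourierTD f))) (x : Rd d)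
    (hx : P x ≠ 0) (U : Set (Rd d)) (hU : U ∈ bohr d) : RelDense {h | h ∈ U ∧ P (x + h) ≠ 0} := by
  obtain ⟨U1, hU1, r, hr, hthick⟩ := bohr_thicken hU
  obtain ⟨r2, hr2, _, hiso⟩ := ud_iso H.hη H.ud x
  obtain ⟨φ, hc, hs, hne⟩ := jets hx (lt_min hr hr2)
  have hval : f (tr x φ) ≠ 0 := by
    rw [H.eval_at (hs.trans (ball_subset_ball (min_le_right _ _))) hiso]; exact hne
  have h1 : {h | f (tr h (tr x φ)) ≠ 0} ∈ bohr d := (H.bohr_lim hΓ (tr x φ)).eventually_ne hval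
  obtain ⟨R, hR, hRd⟩ := bohr_relDense (inter_mem hU1 h1)
  refine ⟨R + r, by positivity, fun y => ?_⟩
  obtain ⟨h, ⟨hh1, hh2⟩, hd⟩ := hRd y
  simp only [mem_setOf_eq] at hh2
  rw [tr_tr, H.rep_tr] at hh2
  have : ∃ l, rho 0 φ (l - (x + h)) (P l) ≠ 0 := by
    by_contra hcon; push Not at hcon
    exact hh2 (by simp [hcon])
  obtain ⟨l, hl⟩ := this
  have hP : P l ≠ 0 := by rintro h0; rw [h0, map_zero] at hl; exact hl rfl
  have hlt : ‖l - (x + h)‖ < r := by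
    by_contra hcon
    refine hl ?_
    rw [rho_zero_of_notMem, ContinuousLinearMap.zero_apply]
    intro hm
    have := hs hm
    rw [mem_ball_zero_iff] at this
    exact hcon (this.trans_le (min_le_left _ _))
  have e : l - x = h + (l - (x + h)) := by abel
  refine ⟨l - x, ⟨?_, ?_⟩, ?_⟩
  · rw [e]; exact hthick h hh1 _ hlt
  · rwa [add_sub_cancel]
  · have h3 : dist h (l - x) < r := by
      rw [dist_comm, dist_eq_norm, e, add_sub_cancel_left]; exact hlt
    have := dist_triangle y h (l - x)
    linarith

end G23

section PRsec

lemma exists_rec_filter : ∃ V : Filter ℕ, V.NeBot ∧ V ≤ atTop ∧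
    ∀ z : ℂ, ‖z‖ = 1 → Tendsto (fun n => z ^ n) V (𝓝 1) := by
  let U : Filter ℕ := (hyperfilter ℕ : Filter ℕ)
  have hU : U ≤ atTop := by rw [← Nat.cofinite_eq_atTop]; exact hyperfilter_le_cofinite
  have hge : ∀ N : ℕ, ∀ᶠ p : ℕ × ℕ in Filter.curry U U, p.1 + N ≤ p.2 := by
    intro N
    rw [Filter.eventually_curry_iff]
    exact Eventually.of_forall fun a => (eventually_ge_atTop (a + N)).filter_mono hU
  haveI hUne : U.NeBot := (hyperfilter ℕ).neBot
  haveI hcne : (Filter.curry U U).NeBot := by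
    refine ⟨fun h => ?_⟩
    have h1 : ∀ᶠ p : ℕ × ℕ in Filter.curry U U, False := by rw [h]; exact mem_bot
    rw [Filter.eventually_curry_iff] at h1
    obtain ⟨a, ha⟩ := h1.exists
    exact ha.exists.elim fun _ h => h
  refine ⟨Filter.map (fun p : ℕ × ℕ => p.2 - p.1) (Filter.curry U U), hcne.map _, ?_, fun z hz => ?_⟩
  · refine tendsto_atTop.2 fun N => ?_
    filter_upwards [hge N] with p hp
    omega
  · rw [tendsto_map'_iff]
    obtain ⟨l, hl, hlim⟩ := (isCompact_sphere (0 : ℂ) 1).ultrafilter_le_nhds ((hyperfilter ℕ).map fun n => z ^ n) (by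
      refine le_principal_iff.2 ?_
      have : ∀ᶠ n in U, z ^ n ∈ sphere (0:ℂ) 1 := Eventually.of_forall fun n => by simp [hz]
      exact this)
    have hl1 : ‖l‖ = 1 := by simpa using hl
    have hl0 : l ≠ 0 := by rintro rfl; simp at hl1
    have hlim' : Tendsto (fun n => z ^ n) U (𝓝 l) := hlim
    have h2 : Tendsto (fun p : ℕ × ℕ => z ^ p.2 * (z ^ p.1)⁻¹) (U ×ˢ U) (𝓝 (l * l⁻¹)) :=
      (hlim'.comp tendsto_snd).mul ((hlim'.comp tendsto_fst).inv₀ hl0)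
    rw [mul_inv_cancel₀ hl0] at h2
    refine (h2.mono_left Filter.curry_le_prod).congr' ?_
    filter_upwards [hge 0] with p hp
    have hz0 : z ≠ 0 := by rintro rfl; simp at hz
    simp only [Function.comp_apply]
    rw [pow_sub₀ z hz0 (by omega)]

variable (V : Filter ℕ)

def RecR : Subring (ℕ → ℂ) where
  carrier := {a | ∀ m, Tendsto (fun n => a (m + n)) V (𝓝 (a m))}
  mul_mem' ha hb m := (ha m).mul (hb m)
  one_mem' _ := tendsto_const_nhds
  add_mem' ha hb m := (ha m).add (hb m)
  zero_mem' _ := tendsto_const_nhds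
  neg_mem' ha m := (ha m).neg

def evR (s : ℂ) (n : ℕ) : Polynomial (RecR V) →+* ℂ :=
  Polynomial.eval₂RingHom ((Pi.evalRingHom (fun _ : ℕ => ℂ) n).comp (RecR V).subtype) s

def PR (G : ℂ → ℕ → ℂ) : Prop := ∃ q : Polynomial (RecR V), ∀ s n, G s n = evR V s n q

variable {V}

lemma evR_eq (s : ℂ) (n : ℕ) (q : Polynomial (RecR V)) :
    evR V s n q = ∑ i ∈ Finset.range (q.natDegree + 1), (q.coeff i).1 n * s ^ i := by
  simp only [evR, Polynomial.coe_eval₂RingHom, Polynomial.eval₂_eq_sum_range]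
  rfl

lemma PR.mul {G G' : ℂ → ℕ → ℂ} (h : PR V G) (h' : PR V G') : PR V fun s n => G s n * G' s n := by
  obtain ⟨q, hq⟩ := h
  obtain ⟨q', hq'⟩ := h'
  exact ⟨q * q', fun s n => by rw [map_mul, ← hq, ← hq']⟩

lemma PR.sub {G G' : ℂ → ℕ → ℂ} (h : PR V G) (h' : PR V G') : PR V fun s n => G s n - G' s n := by
  obtain ⟨q, hq⟩ := h
  obtain ⟨q', hq'⟩ := h'
  exact ⟨q - q', fun s n => by rw [map_sub, ← hq, ← hq']⟩

lemma PR.sum {ι : Type*} (S : Finset ι) {G : ι → ℂ → ℕ → ℂ} (h : ∀ i ∈ S, PR V (G i)) :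
    PR V fun s n => ∑ i ∈ S, G i s n := by
  choose! q hq using h
  exact ⟨∑ i ∈ S, q i, fun s n => by rw [map_sum]; exact Finset.sum_congr rfl fun i hi => hq i hi s n⟩

lemma PR.monom {a : ℕ → ℂ} (ha : a ∈ RecR V) (j : ℕ) : PR V fun s n => s ^ j * a n := by
  refine ⟨Polynomial.C ⟨a, ha⟩ * Polynomial.X ^ j, fun s n => ?_⟩
  simp only [evR, Polynomial.coe_eval₂RingHom, Polynomial.eval₂_mul, Polynomial.eval₂_C, Polynomial.eval₂_X_pow]
  rw [mul_comm]; rfl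

lemma PR.conj {G : ℂ → ℕ → ℂ} (h : PR V G) : PR V fun s n => (starRingEnd ℂ) (G ((starRingEnd ℂ) s) n) := by
  obtain ⟨q, hq⟩ := h
  have hc : ∀ a : RecR V, (fun n => (starRingEnd ℂ) (a.1 n)) ∈ RecR V := fun a m =>
    (Complex.continuous_conj.tendsto _).comp (a.2 m)
  have key : PR V fun s n => ∑ i ∈ Finset.range (q.natDegree + 1), s ^ i * (starRingEnd ℂ) ((q.coeff i).1 n) :=
    PR.sum _ fun i _ => PR.monom (hc _) i
  obtain ⟨q', hq'⟩ := key
  refine ⟨q', fun s n => ?_⟩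
  rw [← hq']
  change (starRingEnd ℂ) (G ((starRingEnd ℂ) s) n) = ∑ i ∈ Finset.range (q.natDegree + 1), s ^ i * (starRingEnd ℂ) ((q.coeff i).1 n)
  rw [hq, evR_eq, map_sum]
  refine Finset.sum_congr rfl fun i _ => ?_
  rw [map_mul, map_pow, Complex.conj_conj, mul_comm]

lemma PR.vanish (hV : V.NeBot) (hle : V ≤ atTop) {G : ℂ → ℕ → ℂ} (h : PR V G) (h0 : ∀ n : ℕ, G n n = 0) :
    ∀ s n, G s n = 0 := by
  obtain ⟨q, hq⟩ := h
  suffices hq0 : q = 0 by intro s n; rw [hq, hq0, map_zero]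
  by_contra hne
  have hlead : q.coeff q.natDegree ≠ 0 := by
    rw [Polynomial.coeff_natDegree]; exact Polynomial.leadingCoeff_ne_zero.2 hne
  refine hlead (Subtype.ext (funext fun m => ?_))
  change (q.coeff q.natDegree).1 m = 0
  set N := q.natDegree with hN
  have hcast : Tendsto (fun n : ℕ => (((m + n : ℕ) : ℂ))⁻¹) V (𝓝 0) := by
    have h1 : Tendsto (fun n : ℕ => ((n : ℂ))⁻¹) atTop (𝓝 0) := tendsto_inv_atTop_nhds_zero_nat
    have h2 : Tendsto (fun n : ℕ => m + n) V atTop := by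
      refine Tendsto.mono_left ?_ hle
      exact tendsto_atTop_mono (fun n => Nat.le_add_left n m) tendsto_id
    exact h1.comp h2
  have hlim : Tendsto (fun n => ∑ i ∈ Finset.range (N + 1), (q.coeff i).1 (m + n) * ((((m + n : ℕ) : ℂ))⁻¹) ^ (N - i)) V
      (𝓝 (∑ i ∈ Finset.range (N + 1), (q.coeff i).1 m * (0:ℂ) ^ (N - i))) :=
    tendsto_finset_sum _ fun i _ => ((q.coeff i).2 m).mul (hcast.pow _)
  have hsum : ∑ i ∈ Finset.range (N + 1), (q.coeff i).1 m * (0:ℂ) ^ (N - i) = (q.coeff N).1 m := by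
    rw [Finset.sum_range_succ, Finset.sum_eq_zero, zero_add, Nat.sub_self, pow_zero, mul_one]
    intro i hi
    have : N - i ≠ 0 := by have := Finset.mem_range.1 hi; omega
    rw [zero_pow this, mul_zero]
  rw [hsum] at hlim
  refine tendsto_nhds_unique hlim ?_
  refine tendsto_const_nhds.congr' ?_
  filter_upwards [hle (eventually_ge_atTop 1)] with n hn
  have hx : ((m + n : ℕ) : ℂ) ≠ 0 := by
    rw [Nat.cast_ne_zero]; omega
  have h1 := h0 (m + n)
  rw [hq, evR_eq] at h1
  have h2 : ∑ i ∈ Finset.range (N + 1), (q.coeff i).1 (m + n) * ((((m + n : ℕ) : ℂ))⁻¹) ^ (N - i)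
      = (∑ i ∈ Finset.range (N + 1), (q.coeff i).1 (m + n) * (((m + n : ℕ) : ℂ)) ^ i) * ((((m + n : ℕ) : ℂ))⁻¹) ^ N := by
    rw [Finset.sum_mul]
    refine Finset.sum_congr rfl fun i hi => ?_
    have hi' : i ≤ N := Nat.lt_succ_iff.1 (Finset.mem_range.1 hi)
    rw [mul_assoc]
    congr 1
    have : ((((m + n : ℕ) : ℂ))⁻¹) ^ N = ((((m + n : ℕ) : ℂ))⁻¹) ^ i * ((((m + n : ℕ) : ℂ))⁻¹) ^ (N - i) := by
      rw [← pow_add, Nat.add_sub_cancel' hi']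
    rw [this, ← mul_assoc, ← mul_pow, mul_inv_cancel₀ hx, one_pow, one_mul]
  rw [h2, h1, zero_mul]

lemma rec_of_summable (hz : ∀ z : ℂ, ‖z‖ = 1 → Tendsto (fun n => z ^ n) V (𝓝 1)) {ι : Type*} (w A : ι → ℂ)
    (hw : ∀ x, ‖w x‖ = 1) (hA : Summable fun x => ‖A x‖) : (fun n => ∑' x, w x ^ n * A x) ∈ RecR V := by
  intro m
  refine tendsto_tsum_of_dominated_convergence hA (fun x => ?_) (Eventually.of_forall fun n x => ?_)
  · have := ((hz (w x) (hw x)).const_mul (w x ^ m)).mul_const (A x)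
    simpa only [pow_add, mul_one] using this
  · rw [norm_mul, norm_pow, hw, one_pow, one_mul]

end PRsec

section Parseval
variable {d : ℕ}
open BoundedContinuousFunction

def EB (x : Rd d) : Rd d →ᵇ ℂ :=
  BoundedContinuousFunction.ofNormedAddCommGroup (fun ξ => e2pi ξ (-x)) (continuous_e2pi_left (-x)) 1
    (fun ξ => (norm_e2pi _ _).le)

lemma EB_apply (x ξ : Rd d) : EB x ξ = e2pi ξ (-x) := rfl

lemma EB_norm (x : Rd d) : ‖EB x‖ ≤ 1 := BoundedContinuousFunction.norm_ofNormedAddCommGroup_le _ zero_le_one _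

lemma mean_int (R : ℝ) (F : Rd d →ᵇ ℂ) : Integrable (fun ξ : Rd d => F (R • ξ) * (wt ξ : ℂ)) := by
  refine Integrable.bdd_mul (c := ‖F‖) wt_integrable.ofReal ?_ (Eventually.of_forall fun ξ => F.norm_coe_le_norm _)
  exact (F.continuous.comp (continuous_const_smul R)).aestronglyMeasurable

def meanL (R : ℝ) : (Rd d →ᵇ ℂ) →L[ℂ] ℂ :=
  LinearMap.mkContinuous
    { toFun := fun F => ∫ ξ : Rd d, F (R • ξ) * (wt ξ : ℂ)
      map_add' := fun F G => by
        rw [← integral_add (mean_int R F) (mean_int R G)]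
        refine integral_congr_ae (Eventually.of_forall fun ξ => ?_)
        simp only [BoundedContinuousFunction.coe_add, Pi.add_apply, add_mul]
      map_smul' := fun c F => by
        simp only [RingHom.id_apply, smul_eq_mul]
        rw [← integral_const_mul]
        refine integral_congr_ae (Eventually.of_forall fun ξ => ?_)
        simp only [BoundedContinuousFunction.coe_smul, smul_eq_mul, mul_assoc] }
    (∫ ξ : Rd d, wt ξ) fun F => by
      change ‖∫ ξ : Rd d, F (R • ξ) * (wt ξ : ℂ)‖ ≤ _
      rw [mul_comm, ← integral_const_mul]
      refine norm_integral_le_of_norm_le (wt_integrable.const_mul _) (Eventually.of_forall fun ξ => ?_)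
      rw [norm_mul, Complex.norm_real, Real.norm_of_nonneg (wt_pos ξ).le]
      exact mul_le_mul_of_nonneg_right (F.norm_coe_le_norm _) (wt_pos ξ).le

lemma meanL_apply (R : ℝ) (F : Rd d →ᵇ ℂ) : meanL R F = ∫ ξ : Rd d, F (R • ξ) * (wt ξ : ℂ) := rfl

lemma meanL_bound (R : ℝ) (F : Rd d →ᵇ ℂ) : ‖meanL R F‖ ≤ (∫ ξ : Rd d, wt ξ) * ‖F‖ := by
    rw [meanL_apply, mul_comm, ← integral_const_mul]
    refine norm_integral_le_of_norm_le (wt_integrable.const_mul _) (Eventually.of_forall fun ξ => ?_)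
    rw [norm_mul, Complex.norm_real, Real.norm_of_nonneg (wt_pos ξ).le]
    exact mul_le_mul_of_nonneg_right (F.norm_coe_le_norm _) (wt_pos ξ).le

def c0 (d : ℕ) : ℝ := ∫ ξ : Rd d, wt ξ

lemma c0_pos : 0 < c0 d := by
  unfold c0
  rw [integral_pos_iff_support_of_nonneg (fun ξ => (wt_pos ξ).le) wt_integrable]
  have : Function.support (wt (d := d)) = univ := by
    ext x; simp [(wt_pos x).ne']
  rw [this]
  exact (isOpen_univ).measure_pos _ univ_nonempty

lemma meanL_char (x y : Rd d) : Tendsto (fun n : ℕ => meanL (n:ℝ) (EB x * star (EB y))) atTop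
    (𝓝 (if x = y then (c0 d : ℂ) else 0)) := by
  have e : ∀ n : ℕ, meanL (n:ℝ) (EB x * star (EB y)) = ∫ ξ : Rd d, e2pi ξ (-((n:ℝ) • (x - y))) * (wt ξ : ℂ) := by
    intro n
    rw [meanL_apply]
    refine integral_congr_ae (Eventually.of_forall fun ξ => ?_)
    have : (EB x * star (EB y)) ((n:ℝ) • ξ) = e2pi ξ (-((n:ℝ) • (x - y))) := by
      change EB x ((n:ℝ) • ξ) * (starRingEnd ℂ) (EB y ((n:ℝ) • ξ)) = _
      rw [EB_apply, EB_apply, conj_e2pi]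
      simp only [e2pi]
      rw [← Complex.exp_add]
      congr 1
      simp only [inner_neg_right, inner_neg_left, inner_smul_left, inner_smul_right, inner_sub_right,
        conj_trivial]
      push_cast; ring
    simp only [this]
  simp only [e]
  split_ifs with h
  · subst h
    simp only [sub_self, smul_zero, neg_zero, e2pi_zero_right, one_mul]
    rw [integral_complex_ofReal]
    exact tendsto_const_nhds
  · have hxy : x - y ≠ 0 := sub_ne_zero.2 h
    have h1 := tendsto_integral_exp_inner_smul_cocompact (V := Rd d) (fun ξ => (wt ξ : ℂ))
    have h2 : Tendsto (fun n : ℕ => (n:ℝ) • (x - y)) atTop (cocompact (Rd d)) := by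
      rw [← Metric.cobounded_eq_cocompact, ← tendsto_norm_atTop_iff_cobounded]
      simp only [norm_smul, Real.norm_natCast]
      exact tendsto_natCast_atTop_atTop.atTop_mul_const (norm_pos_iff.2 hxy)
    refine (h1.comp h2).congr fun n => ?_
    refine integral_congr_ae (Eventually.of_forall fun ξ => ?_)
    simp only [Circle.smul_def, smul_eq_mul, Real.fourierChar_apply, e2pi, inner_neg_right]
    congr 2
    push_cast; ring

lemma EB_summ (α : Rd d → ℂ) (hα : Summable fun x => ‖α x‖) : Summable fun x => ‖α x • EB x‖ :=
  hα.of_nonneg_of_le (fun _ => norm_nonneg _) fun x => by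
    rw [norm_smul]; exact mul_le_of_le_one_right (norm_nonneg _) (EB_norm x)

lemma EB_star_smul (b : ℂ) (y : Rd d) : star (b • EB y) = (starRingEnd ℂ) b • star (EB y) := by
  ext ξ
  exact map_mul (starRingEnd ℂ) _ _

lemma EB_summ_star (β : Rd d → ℂ) (hβ : Summable fun x => ‖β x‖) : Summable fun x => ‖star (β x • EB x)‖ := by
  refine (EB_summ β hβ).congr fun x => ?_
  exact (norm_star _).symm

lemma abs_prod {ι A : Type*} [NormedRing A] [CompleteSpace A] (a b : ι → A) (ha : Summable fun x => ‖a x‖)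
    (hb : Summable fun x => ‖b x‖) : HasSum (fun z : ι × ι => a z.1 * b z.2) ((∑' x, a x) * ∑' x, b x) := by
  rw [tsum_mul_tsum_of_summable_norm ha hb]
  exact (summable_mul_of_summable_norm ha hb).hasSum

lemma abs_star {ι A : Type*} [NormedRing A] [StarRing A] [NormedStarGroup A] [CompleteSpace A] (b : ι → A)
    (hb : Summable fun x => ‖b x‖) : star (∑' x, b x) = ∑' x, star (b x) := tsum_star

lemma EB_prod (α β : Rd d → ℂ) (hα : Summable fun x => ‖α x‖) (hβ : Summable fun x => ‖β x‖) :
    HasSum (fun z : Rd d × Rd d => (α z.1 * (starRingEnd ℂ) (β z.2)) • (EB z.1 * star (EB z.2)))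
      ((∑' x, α x • EB x) * star (∑' x, β x • EB x)) := by
  have hst := abs_star _ (EB_summ β hβ)
  have := abs_prod _ _ (EB_summ α hα) (EB_summ_star β hβ)
  rw [hst]
  have e : (fun z : Rd d × Rd d => (α z.1 * (starRingEnd ℂ) (β z.2)) • (EB z.1 * star (EB z.2))) =
      fun z : Rd d × Rd d => (α z.1 • EB z.1) * star (β z.2 • EB z.2) := by
    funext z
    rw [EB_star_smul, smul_mul_smul_comm]
  rw [e]
  exact this

lemma EB_char_bound (n : ℕ) (x y : Rd d) : ‖meanL (n:ℝ) (EB x * star (EB y))‖ ≤ c0 d := by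
  refine (meanL_bound _ _).trans ?_
  refine mul_le_of_le_one_right c0_pos.le ?_
  refine (norm_mul_le _ _).trans ?_
  refine mul_le_one₀ (EB_norm _) (norm_nonneg _) ?_
  exact (norm_star (EB y)).trans_le (EB_norm y)

lemma parseval_lim (α β : Rd d → ℂ) (hα : Summable fun x => ‖α x‖) (hβ : Summable fun x => ‖β x‖) :
    Tendsto (fun n : ℕ => meanL (n:ℝ) ((∑' x, α x • EB x) * star (∑' x, β x • EB x))) atTop
      (𝓝 (c0 d * ∑' x, α x * (starRingEnd ℂ) (β x))) := by
  have e2 : ∀ n : ℕ, meanL (n:ℝ) ((∑' x, α x • EB x) * star (∑' x, β x • EB x)) =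
      ∑' z : Rd d × Rd d, (α z.1 * (starRingEnd ℂ) (β z.2)) * meanL (n:ℝ) (EB z.1 * star (EB z.2)) := by
    intro n
    have := (meanL (n:ℝ)).hasSum (EB_prod α β hα hβ)
    rw [← this.tsum_eq]
    refine tsum_congr fun z => ?_
    rw [map_smul, smul_eq_mul]
  rw [funext e2]
  have e3 : (c0 d : ℂ) * ∑' x, α x * (starRingEnd ℂ) (β x) =
      ∑' z : Rd d × Rd d, (α z.1 * (starRingEnd ℂ) (β z.2)) * (if z.1 = z.2 then (c0 d : ℂ) else 0) := by
    rw [← tsum_mul_left]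
    have hinj : Function.Injective fun x : Rd d => (x, x) := fun a b h => (Prod.mk.inj h).1
    rw [← hinj.tsum_eq]
    · refine tsum_congr fun x => ?_
      simp only [if_true]; ring
    · intro z hz
      by_contra hcon
      refine hz ?_
      have : z.1 ≠ z.2 := fun h => hcon ⟨z.1, by ext1 <;> simp [h]⟩
      change _ * (if z.1 = z.2 then (c0 d : ℂ) else 0) = 0
      rw [if_neg this, mul_zero]
  rw [e3]
  have hb : Summable fun z : Rd d × Rd d => (‖α z.1‖ * ‖β z.2‖) * c0 d :=
    (hα.mul_of_nonneg hβ (fun _ => norm_nonneg _) (fun _ => norm_nonneg _)).mul_right _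
  refine tendsto_tsum_of_dominated_convergence hb (fun z => (meanL_char z.1 z.2).const_mul _)
    (Eventually.of_forall fun n z => ?_)
  rw [norm_mul, norm_mul, RCLike.norm_conj]
  exact mul_le_mul_of_nonneg_left (EB_char_bound n _ _) (by positivity)

lemma EB_tsum (α : Rd d → ℂ) (hα : Summable fun x => ‖α x‖) (ξ : Rd d) :
    (∑' x, α x • EB x) ξ = ∑' x, e2pi x (-ξ) * α x := by
  have hα' : Summable fun x => α x • EB x := Summable.of_norm (hα.of_nonneg_of_le (fun _ => norm_nonneg _) fun x => by
    rw [norm_smul]; exact mul_le_of_le_one_right (norm_nonneg _) (EB_norm x))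
  have := (BoundedContinuousFunction.evalCLM ℂ ξ).map_tsum hα'
  simp only [BoundedContinuousFunction.evalCLM_apply] at this
  rw [this]
  refine tsum_congr fun x => ?_
  change α x * EB x ξ = _
  rw [EB_apply, mul_comm, e2pi_neg_right ξ x, e2pi_neg_right x ξ, e2pi_comm ξ x]

lemma parseval_eq (α β α' β' : Rd d → ℂ) (hα : Summable fun x => ‖α x‖) (hβ : Summable fun x => ‖β x‖)
    (hα' : Summable fun x => ‖α' x‖) (hβ' : Summable fun x => ‖β' x‖)
    (h : ∀ ξ, (∑' x, e2pi x (-ξ) * α x) * (starRingEnd ℂ) (∑' x, e2pi x (-ξ) * β x) =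
      (∑' x, e2pi x (-ξ) * α' x) * (starRingEnd ℂ) (∑' x, e2pi x (-ξ) * β' x)) :
    ∑' x, α x * (starRingEnd ℂ) (β x) = ∑' x, α' x * (starRingEnd ℂ) (β' x) := by
  have h1 := parseval_lim α β hα hβ
  have h2 := parseval_lim α' β' hα' hβ'
  have e : (∑' x, α x • EB x) * star (∑' x, β x • EB x) = (∑' x, α' x • EB x) * star (∑' x, β' x • EB x) := by
    ext ξ
    have := h ξ
    rw [← EB_tsum _ hα, ← EB_tsum _ hβ, ← EB_tsum _ hα', ← EB_tsum _ hβ'] at this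
    exact this
  rw [e] at h1
  have := tendsto_nhds_unique h1 h2
  exact mul_left_cancel₀ (by exact_mod_cast c0_pos.ne') this

end Parseval

section G1sec
variable {d K : ℕ} {f : TemperedDist d} {Λ0 : Set (Rd d)} {η C : ℝ} {P : Rd d → VV d K}

lemma Hyp.shift_wt (H : Hyp f Λ0 η C P) (t : Rd d) :
    Summable fun x => Λ0.indicator (fun y => wt (y - t)) (x + t) := by
  obtain ⟨M, -, hM⟩ := ud_sum H.hη H.ud
  have h1 := (hM t).1
  generalize (Λ0.indicator fun y => wt (y - t)) = F at h1 ⊢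
  exact h1.comp_injective (add_left_injective t)

lemma Hyp.shift_sum (H : Hyp f Λ0 η C P) (φ : SS d) (t : Rd d) (k : mIdx d K) :
    Summable fun x => ‖φ x * P (x + t) k‖ := by
  refine ((H.shift_wt t).mul_left (qd φ * C)).of_nonneg_of_le (fun _ => norm_nonneg _) fun x => ?_
  by_cases hx : x + t ∈ Λ0
  · rw [Set.indicator_of_mem hx, add_sub_cancel_right, norm_mul]
    have h1 := norm_le_qd φ x
    have h2 : ‖P (x + t) k‖ ≤ C := (norm_le_pi_norm _ k).trans (H.bd.bd _)
    calc ‖φ x‖ * ‖P (x + t) k‖ ≤ (qd φ * wt x) * C :=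
          mul_le_mul h1 h2 (norm_nonneg _) ((norm_nonneg _).trans h1)
      _ = _ := by ring
  · have h0 : P (x + t) = 0 := by
      by_contra h; exact hx (H.bd.supp _ h)
    rw [Set.indicator_of_notMem hx, h0, Pi.zero_apply, mul_zero, norm_zero, mul_zero]

lemma Hyp.norm_summable (H : Hyp f Λ0 η C P) (a : Fin d → ℂ) (φ : SS d) (t : Rd d) :
    Summable fun x => ‖rho a φ x (P (x + t))‖ := by
  refine ((H.shift_wt t).mul_left (C * qq K a φ)).of_nonneg_of_le (fun _ => norm_nonneg _) fun x => ?_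
  have := H.term_bound a φ t (x + t)
  rwa [add_sub_cancel_right] at this

def GG (P : Rd d → VV d K) (g : SS d) (ζ θ t : Rd d) (s : ℂ) (n : ℕ) : ℂ :=
  ∑' x, e2pi x (-ζ) * e2pi x (-θ) ^ n * rho (fun i => aa ζ i + s * aa θ i) g x (P (x + t))

lemma Hyp.GG_PR (H : Hyp f Λ0 η C P) {V : Filter ℕ}
    (hz : ∀ z : ℂ, ‖z‖ = 1 → Tendsto (fun n => z ^ n) V (𝓝 1)) (g : SS d) (ζ θ t : Rd d) :
    PR V (GG P g ζ θ t) := by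
  choose N c hc using fun k : mIdx d K => DS_poly (aa ζ) (aa θ) (k : Fin d → ℕ)
  let A : mIdx d K → ℕ → Rd d → ℂ := fun k j x =>
    e2pi x (-ζ) * (P (x + t) k * ((-1) ^ (∑ i, (k : Fin d → ℕ) i) * (c k j g) x))
  have hA : ∀ k j, Summable fun x => ‖A k j x‖ := by
    intro k j
    refine (H.shift_sum (c k j g) t k).congr fun x => ?_
    simp only [A, norm_mul, norm_e2pi, norm_pow, norm_neg, norm_one, one_pow, one_mul]
    ring
  have e : GG P g ζ θ t = fun s n => ∑ k, ∑ j ∈ Finset.range (N k), s ^ j * ∑' x, e2pi x (-θ) ^ n * A k j x := by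
    funext s n
    have hs : ∀ k j, Summable fun x => s ^ j * (e2pi x (-θ) ^ n * A k j x) := fun k j => by
      refine Summable.mul_left _ (Summable.of_norm ((hA k j).congr fun x => ?_))
      exact (by rw [norm_mul, norm_pow, norm_e2pi, one_pow, one_mul] : ‖e2pi x (-θ) ^ n * A k j x‖ = ‖A k j x‖).symm
    have h1 : ∀ x, e2pi x (-ζ) * e2pi x (-θ) ^ n * rho (fun i => aa ζ i + s * aa θ i) g x (P (x + t)) =
        ∑ k, ∑ j ∈ Finset.range (N k), s ^ j * (e2pi x (-θ) ^ n * A k j x) := by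
      intro x
      rw [rho_apply, Finset.mul_sum]
      refine Finset.sum_congr rfl fun k _ => ?_
      have h2 : (DS (fun i => aa ζ i + s * aa θ i) (k : Fin d → ℕ) g) x = ∑ j ∈ Finset.range (N k), s ^ j * (c k j g) x := by
        rw [hc, ContinuousLinearMap.sum_apply, SchwartzMap.sum_apply]
        rfl
      rw [h2, Finset.mul_sum, Finset.mul_sum, Finset.mul_sum]
      refine Finset.sum_congr rfl fun j _ => ?_
      simp only [A]
      ring
    unfold GG
    rw [tsum_congr h1, Summable.tsum_finsetSum fun k _ => summable_sum fun j _ => hs k j]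
    refine Finset.sum_congr rfl fun k _ => ?_
    rw [Summable.tsum_finsetSum fun j _ => hs k j]
    exact Finset.sum_congr rfl fun j _ => tsum_mul_left
  rw [e]
  exact PR.sum _ fun k _ => PR.sum _ fun j _ => PR.monom (rec_of_summable hz _ _ (fun x => norm_e2pi _ _) (hA k j)) j

lemma e2pi_nsmul (x θ : Rd d) (n : ℕ) : e2pi x (-((n:ℝ) • θ)) = e2pi x (-θ) ^ n := by
  simp only [e2pi]
  rw [← Complex.exp_nat_mul]
  congr 1
  simp only [inner_neg_right, inner_smul_right]
  push_cast; ring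

lemma Hyp.GG_diag (H : Hyp f Λ0 η C P) (ψ : SS d) (ζ θ t : Rd d) (n : ℕ) :
    GG P (FT ψ) ζ θ t n n = f (tr t (FT (tr (ζ + (n:ℝ) • θ) ψ))) := by
  rw [H.rep_tr, ← (Equiv.addRight t).tsum_eq]
  refine tsum_congr fun x => ?_
  simp only [Equiv.coe_addRight, add_sub_cancel_right]
  rw [rho_mod (ζ + (n:ℝ) • θ) (FT ψ) _ (FT_tr _ ψ)]
  have ha : (fun i => aa ζ i + (n:ℂ) * aa θ i) = aa (ζ + (n:ℝ) • θ) := by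
    funext i
    simp only [aa, PiLp.add_apply, PiLp.smul_apply, smul_eq_mul]
    push_cast; ring
  rw [ha, neg_add, e2pi_add_right, e2pi_nsmul]
  rfl

lemma Hyp.quasi (H : Hyp f Λ0 η C P) {ε : ℝ} (hε : 0 < ε)
    (hΓ : ∀ x ∈ tdSupport (fourierTD f), ∀ y ∈ tdSupport (fourierTD f), x ≠ y → ε ≤ dist x y)
    (ψ : SS d) (hψ : HasCompactSupport ψ) (hs : tsupport ψ ⊆ closedBall 0 (ε / 3)) (ξ : Rd d) :
    ∃ γ, ∀ t, f (tr t (FT (tr ξ ψ))) = e2pi γ t * f (FT (tr ξ ψ)) := by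
  obtain ⟨γ, hγ⟩ := ud_one hε hΓ ξ
  have hfun : ⇑(tr ξ ψ) = ψ ∘ (Homeomorph.subRight ξ) := by
    funext x; rw [tr_apply]; rfl
  refine ⟨γ, fun t => H.lemA t γ _ ?_ fun x hx hxΓ => hγ x hxΓ ?_⟩
  · rw [hfun]; exact hψ.comp_homeomorph _
  · rw [hfun, tsupport_comp_eq_preimage] at hx
    have := hs hx
    simpa [dist_eq_norm] using this

lemma Hyp.G1s (H : Hyp f Λ0 η C P) {ε : ℝ} (hε : 0 < ε)
    (hΓ : ∀ x ∈ tdSupport (fourierTD f), ∀ y ∈ tdSupport (fourierTD f), x ≠ y → ε ≤ dist x y)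
    (ψ : SS d) (hψ : HasCompactSupport ψ) (hs : tsupport ψ ⊆ closedBall 0 (ε / 3)) (ζ h t : Rd d) :
    ∑' x, rho (aa ζ) (FT ψ) (x - t) (P (x + h)) * (starRingEnd ℂ) (rho (aa ζ) (FT ψ) (x - t) (P x)) =
    ∑' x, rho (aa ζ) (FT ψ) (x - 0) (P (x + h)) * (starRingEnd ℂ) (rho (aa ζ) (FT ψ) (x - 0) (P x)) := by
  obtain ⟨V, hV, hle, hz⟩ := exists_rec_filter
  have key : ∀ ξ, (∑' x, e2pi x (-ξ) * rho (aa ζ) (FT ψ) x (P (x + (t + h)))) *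
      (starRingEnd ℂ) (∑' x, e2pi x (-ξ) * rho (aa ζ) (FT ψ) x (P (x + t))) =
      (∑' x, e2pi x (-ξ) * rho (aa ζ) (FT ψ) x (P (x + h))) *
      (starRingEnd ℂ) (∑' x, e2pi x (-ξ) * rho (aa ζ) (FT ψ) x (P (x + 0))) := by
    intro ξ
    let θ := ξ - ζ
    have hG : ∀ u, GG P (FT ψ) ζ θ u 0 1 = ∑' x, e2pi x (-ξ) * rho (aa ζ) (FT ψ) x (P (x + u)) := by
      intro u
      refine tsum_congr fun x => ?_
      have h1 : (fun i => aa ζ i + 0 * aa θ i) = aa ζ := by funext i; ring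
      have h2 : e2pi x (-ξ) = e2pi x (-ζ) * e2pi x (-θ) := by
        rw [← e2pi_add_right]; congr 1; simp only [θ]; abel
      rw [h1, h2, pow_one]
    have hPR := fun u => H.GG_PR hz (FT ψ) ζ θ u
    have hD : PR V fun s n => GG P (FT ψ) ζ θ (t + h) s n * (starRingEnd ℂ) (GG P (FT ψ) ζ θ t ((starRingEnd ℂ) s) n)
        - GG P (FT ψ) ζ θ h s n * (starRingEnd ℂ) (GG P (FT ψ) ζ θ 0 ((starRingEnd ℂ) s) n) :=
      ((hPR (t + h)).mul (hPR t).conj).sub ((hPR h).mul (hPR 0).conj)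
    have h0 := PR.vanish hV hle hD (fun n => by
      obtain ⟨γ, hγ⟩ := H.quasi hε hΓ ψ hψ hs (ζ + (n:ℝ) • θ)
      simp only [map_natCast]
      rw [H.GG_diag, H.GG_diag, H.GG_diag, H.GG_diag, hγ, hγ t, hγ h, hγ 0, e2pi_add_right, e2pi_zero_right,
        map_mul, map_mul, map_one, conj_e2pi, e2pi_neg_left]
      have := e2pi_ne_zero γ t
      field_simp
      ring) 0 1
    simp only [map_zero] at h0
    rw [hG, hG, hG, hG] at h0
    exact sub_eq_zero.1 h0
  have := parseval_eq _ _ _ _ (H.norm_summable (aa ζ) (FT ψ) (t + h)) (H.norm_summable (aa ζ) (FT ψ) t)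
    (H.norm_summable (aa ζ) (FT ψ) h) (H.norm_summable (aa ζ) (FT ψ) 0) key
  rw [← (Equiv.addRight t).tsum_eq]
  simp only [Equiv.coe_addRight, add_sub_cancel_right, sub_zero, add_zero, ← add_assoc] at this ⊢
  exact this

end G1sec

section Final
variable {d K : ℕ} {f : TemperedDist d} {Λ0 : Set (Rd d)} {η C : ℝ} {P : Rd d → VV d K}

lemma nd {p : VV d K} (hp : p ≠ 0) {δ : ℝ} (hδ : 0 < δ) : ∃ q : {q : Rd d × SS d // HasCompactSupport q.2 ∧
    tsupport q.2 ⊆ closedBall 0 δ}, rho (aa q.1.1) (FT q.1.2) 0 p ≠ 0 := by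
  by_contra hcon
  have hcon' : ∀ (ζ : Rd d) (ψ : SS d), HasCompactSupport ψ → tsupport ψ ⊆ closedBall 0 δ →
      rho (aa ζ) (FT ψ) 0 p = 0 := by
    intro ζ ψ h1 h2
    by_contra h
    exact hcon ⟨⟨(ζ, ψ), h1, h2⟩, h⟩
  have s1 : ∀ (ζ : Rd d) (ψ : SS d), HasCompactSupport ψ → tsupport ψ ⊆ closedBall ζ δ →
      rho 0 (FT ψ) 0 p = 0 := by
    intro ζ ψ h1 h2
    have e : ψ = tr ζ (tr (-ζ) ψ) := by
      rw [tr_tr]; ext x; rw [tr_apply]; simp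
    have hfun : ⇑(tr (-ζ) ψ) = ψ ∘ (Homeomorph.addRight ζ) := by
      funext x; rw [tr_apply, sub_neg_eq_add]; rfl
    rw [e, rho_mod ζ (FT (tr (-ζ) ψ)) _ (FT_tr ζ _)]
    have : rho (aa ζ) (FT (tr (-ζ) ψ)) 0 p = 0 := by
      refine hcon' ζ _ ?_ ?_
      · rw [hfun]; exact h1.comp_homeomorph _
      · rw [hfun, tsupport_comp_eq_preimage]
        intro x hx
        have := h2 hx
        simpa [dist_eq_norm] using this
    rw [ContinuousLinearMap.smul_apply, this, smul_zero]
  have s2 : ∀ ψ : SS d, HasCompactSupport ψ → rho 0 (FT ψ) 0 p = 0 := by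
    intro ψ hψ
    refine localize (fun ψ => rho 0 (FT ψ) 0 p = 0) ?_ ?_ ψ hψ fun x _ => ⟨δ, hδ, fun ψ' h1 _ h2 => s1 x ψ' h1 h2⟩
    · have := rho_sub_fun (K := K) 0 (FT (0 : SS d)) (FT 0) 0 p
      rw [sub_self, sub_self, ← map_zero FT] at this
      exact this
    · intro a b ha hb
      have := rho_sub_fun (K := K) 0 (FT (a + b)) (FT b) 0 p
      rw [← map_sub, add_sub_cancel_right, ha, hb, sub_zero] at this
      exact this.symm
  have s3 : ∀ φ : SS d, rho 0 (FT φ) 0 p = 0 := by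
    intro φ
    obtain ⟨φs, hc, hlim⟩ := ss_dense φ
    have h1 : Tendsto (fun n => ‖p‖ * qq K 0 (FT (φ - φs n)) * wt (0 : Rd d)) atTop (𝓝 (‖p‖ * qq K 0 (FT (φ - φ)) * wt (0 : Rd d))) := by
      refine Tendsto.mul_const _ (Tendsto.const_mul _ ?_)
      exact (((continuous_qq 0).comp FT.continuous).tendsto (φ - φ)).comp (tendsto_const_nhds.sub hlim)
    rw [sub_self, map_zero, qq_zero, mul_zero, zero_mul] at h1
    refine norm_le_zero_iff.1 (ge_of_tendsto' h1 fun n => ?_)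
    refine le_trans (le_of_eq ?_) (rho_bound 0 (FT (φ - φs n)) 0 p)
    rw [map_sub, rho_sub_fun, s2 _ (hc n), sub_zero]
  obtain ⟨φ, -, -, hne⟩ := jets hp one_pos
  refine hne ?_
  have hf : FT (FourierTransformInv.fourierInv φ) = φ := by
    unfold FT
    rw [fourierTransformCLM_apply]; exact FourierTransform.fourier_fourierInv_eq φ
  rw [← hf]
  exact s3 _

def rhoS {ι : Type*} [Fintype ι] [DecidableEq ι] (q : ι → Rd d × SS d) (x : Rd d) : VV d K →L[ℂ] EuclideanSpace ℂ ι :=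
  ∑ i, (rho (aa (q i).1) (FT (q i).2) x).smulRight (WithLp.toLp 2 (Pi.single i 1))

lemma rhoS_apply {ι : Type*} [Fintype ι] [DecidableEq ι] (q : ι → Rd d × SS d) (x : Rd d) (p : VV d K) (i : ι) :
    rhoS q x p i = rho (aa (q i).1) (FT (q i).2) x p := by
  simp only [rhoS, ContinuousLinearMap.sum_apply, ContinuousLinearMap.smulRight_apply,
    WithLp.ofLp_sum, WithLp.ofLp_smul, Finset.sum_apply, Pi.smul_apply, smul_eq_mul]
  rw [Finset.sum_eq_single i]
  · simp
  · intro j _ hj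
    simp [Pi.single_apply, hj.symm]
  · simp

lemma rhoS_norm {ι : Type*} [Fintype ι] [DecidableEq ι] (q : ι → Rd d × SS d) (x : Rd d) :
    ‖rhoS (K := K) q x‖ ≤ (∑ i, qq K (aa (q i).1) (FT (q i).2)) * wt x := by
  unfold rhoS
  refine (norm_sum_le _ _).trans ?_
  rw [Finset.sum_mul]
  refine Finset.sum_le_sum fun i _ => ?_
  rw [ContinuousLinearMap.norm_smulRight_apply]
  have : ‖(WithLp.toLp 2 (Pi.single i 1) : EuclideanSpace ℂ ι)‖ = 1 := by
    simp
  rw [this, mul_one]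
  exact rho_opNorm _ _ _

lemma Hyp.main_FUL (H : Hyp f Λ0 η C P) (hΓ : UniformlyDiscrete (tdSupport (fourierTD f))) {c : ℝ} (hc : 0 < c)
    (hlow : ∀ x, P x ≠ 0 → c ≤ ‖P x‖) : IsFUL {x | P x ≠ 0} := by
  classical
  obtain ⟨ε, hε, hΓ'⟩ := id hΓ
  obtain ⟨s, κ, hκ, hs⟩ := fin_sep (fun q : {q : Rd d × SS d // HasCompactSupport q.2 ∧
    tsupport q.2 ⊆ closedBall 0 (ε / 3)} => rho (K := K) (aa q.1.1) (FT q.1.2) 0) (fun p hp => nd hp (by positivity))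
  let q : s → Rd d × SS d := fun i => i.1.1
  have hsum : ∀ t : Rd d, Summable (Λ0.indicator fun x => ‖rhoS (K := K) q (x - t)‖ ^ 2) := by
    intro t
    obtain ⟨M, -, hM⟩ := ud_sum H.hη H.ud
    refine ((hM t).1.mul_left ((∑ i, qq K (aa (q i).1) (FT (q i).2)) ^ 2)).of_nonneg_of_le
      (fun x => Set.indicator_nonneg (fun _ _ => by positivity) x) fun x => ?_
    by_cases hx : x ∈ Λ0
    · rw [Set.indicator_of_mem hx, Set.indicator_of_mem hx]
      have h1 := rhoS_norm (K := K) q (x - t)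
      have h2 := wt_pos (x - t)
      have h3 := wt_le_one (x - t)
      calc ‖rhoS (K := K) q (x - t)‖ ^ 2 ≤ ((∑ i, qq K (aa (q i).1) (FT (q i).2)) * wt (x - t)) ^ 2 :=
            pow_le_pow_left₀ (norm_nonneg _) h1 2
        _ = (∑ i, qq K (aa (q i).1) (FT (q i).2)) ^ 2 * (wt (x - t) * wt (x - t)) := by ring
        _ ≤ _ := mul_le_mul_of_nonneg_left (mul_le_of_le_one_right h2.le h3) (sq_nonneg _)
    · rw [Set.indicator_of_notMem hx, Set.indicator_of_notMem hx, mul_zero]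
  have hκ' : ∀ p : VV d K, (κ / (s.card + 1)) * ‖p‖ ≤ ‖rhoS q 0 p‖ := by
    intro p
    have h1 := hs p
    have h2 : ∑ i ∈ s, ‖rho (K := K) (aa i.1.1) (FT i.1.2) 0 p‖ ≤ s.card * ‖rhoS q 0 p‖ := by
      rw [← nsmul_eq_mul]
      refine Finset.sum_le_card_nsmul _ _ _ fun i hi => ?_
      have := PiLp.norm_apply_le (rhoS q 0 p) ⟨i, hi⟩
      rwa [rhoS_apply] at this
    have h3 : (0:ℝ) < s.card + 1 := by positivity
    rw [div_mul_eq_mul_div, div_le_iff₀ h3]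
    have h4 := norm_nonneg (rhoS q 0 p)
    nlinarith [h1.trans h2]
  have hprod : ∀ (a : Fin d → ℂ) (g : SS d) (h t : Rd d),
      Summable fun x => rho a g (x - t) (P (x + h)) * (starRingEnd ℂ) (rho a g (x - t) (P x)) := by
    intro a g h t
    have h1 : Summable fun x => ‖rho a g (x - t) (P (x + h))‖ := by
      have := (H.norm_summable a g (t + h)).comp_injective (sub_left_injective (b := t))
      refine this.congr fun x => ?_
      have e : x - t + (t + h) = x + h := by abel
      simp only [Function.comp_apply, e]
    refine Summable.of_norm ((h1.mul_right (C * qq K a g)).of_nonneg_of_le (fun _ => norm_nonneg _) fun x => ?_)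
    rw [norm_mul, RCLike.norm_conj]
    refine mul_le_mul_of_nonneg_left ?_ (norm_nonneg _)
    refine (rho_bound a g (x - t) (P x)).trans ?_
    have h2 := H.bd.bd x
    have h3 := qq_nonneg (K := K) a g
    have h4 : ‖P x‖ * qq K a g ≤ C * qq K a g := mul_le_mul_of_nonneg_right h2 h3
    exact (mul_le_of_le_one_right (mul_nonneg (norm_nonneg _) h3) (wt_le_one _)).trans h4
  have hBB : ∀ h t : Rd d, BB (rhoS q) t (fun z => P (z + h)) P = ∑ i, ∑' x,
      rho (aa (q i).1) (FT (q i).2) (x - t) (P (x + h)) * (starRingEnd ℂ) (rho (aa (q i).1) (FT (q i).2) (x - t) (P x)) := by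
    intro h t
    rw [← Summable.tsum_finsetSum fun i _ => hprod _ _ h t]
    unfold BB
    refine tsum_congr fun x => ?_
    rw [PiLp.inner_apply]
    refine Finset.sum_congr rfl fun i _ => ?_
    rw [rhoS_apply, rhoS_apply, RCLike.inner_apply]
  have hgood : Good (rhoS q) Λ0 c C P :=
    { bd := H.bd
      low := hlow
      g1 := fun h t => by
        rw [hBB, hBB]
        exact Finset.sum_congr rfl fun i _ => H.G1s hε hΓ' _ i.1.2.1 i.1.2.2 _ h t
      g2 := fun z ε hε => H.G2 hΓ z ε hε
      g3 := fun x hx U hU => H.G3 hΓ x hx U hU }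
  exact good_FUL hc (by positivity) hκ' H.hη H.ud hsum hgood

end Final


end Aux

/-- (Theorem 6.) Let `f = Σ_{λ∈Λ} Σ_k p_k(λ) D^k δ_λ` be a
tempered distribution on `ℝ^d` whose support `Λ` and spectrum are both
uniformly discrete, with coefficients satisfying
`0 < c ≤ sup_k |p_k(λ)| ≤ C < ∞` on `Λ`. Then `Λ` is a finite union of
translates of several full-rank lattices. -/
theorem statement18 {d : ℕ} (f : TemperedDist d) (Λ : Set (Rd d)) (K : ℕ)
    (p : (Fin d → ℕ) → Rd d → ℂ)
    (hp0 : ∀ k ∉ mIdx d K, ∀ x, p k x = 0)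
    (hsupp : ∀ k x, p k x ≠ 0 → x ∈ Λ)
    (hΛ : UniformlyDiscrete Λ)
    (hrep : ∀ φ : SchwartzMap (Rd d) ℂ, HasCompactSupport (⇑φ) →
      f φ = ∑' x : Rd d, ∑ k ∈ mIdx d K, p k x * dkDelta k x φ)
    (hΓ : UniformlyDiscrete (tdSupport (fourierTD f)))
    (c C : ℝ) (hc : 0 < c)
    (hbound : ∀ x ∈ Λ, (∃ k, c ≤ ‖p k x‖) ∧ ∀ k, ‖p k x‖ ≤ C) :
    ∃ (J : ℕ) (L : Fin J → Set (Rd d)) (v : Fin J → Rd d),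
      (∀ j, IsFullRankLattice (L j)) ∧
      Λ = ⋃ j, (fun y => v j + y) '' (L j) := by
  obtain ⟨η, hη, hud⟩ := hΛ
  let P : Rd d → VV d K := fun x k => p k x
  have hPΛ : ∀ x, P x ≠ 0 → x ∈ Λ := by
    intro x hx
    obtain ⟨k, hk⟩ := Function.ne_iff.1 hx
    exact hsupp k x hk
  have hlow : ∀ x ∈ Λ, c ≤ ‖P x‖ := by
    intro x hx
    obtain ⟨⟨k, hk⟩, -⟩ := hbound x hx
    have hkm : k ∈ mIdx d K := by
      by_contra h
      rw [hp0 k h x, norm_zero] at hk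
      linarith
    exact hk.trans (norm_le_pi_norm (P x) ⟨k, hkm⟩)
  have hset : Λ = {x | P x ≠ 0} := by
    ext x
    refine ⟨fun hx h => ?_, hPΛ x⟩
    have := hlow x hx
    rw [h, norm_zero] at this
    linarith
  have H : Hyp f Λ η (max C 0) P :=
    { hη := hη
      ud := hud
      bd := ⟨hPΛ, fun x => by
        by_cases hx : x ∈ Λ
        · refine (pi_norm_le_iff_of_nonneg (le_max_right _ _)).2 fun k => ?_
          exact ((hbound x hx).2 k).trans (le_max_left _ _)
        · have : P x = 0 := by
            by_contra h; exact hx (hPΛ x h)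
          rw [this, norm_zero]; exact le_max_right _ _⟩
      rep := fun φ hφ => by
        rw [hrep φ hφ]
        refine tsum_congr fun x => ?_
        rw [rho_apply, ← Finset.sum_coe_sort]
        refine Finset.sum_congr rfl fun k _ => ?_
        rw [dkDelta, Dmulti_eq] }
  have := H.main_FUL hΓ hc fun x hx => hlow x (hPΛ x hx)
  rw [← hset] at this
  exact this.fin
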